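/- arXiv:1508.07408 — 3 statements merged into one kernel-verified Lean document; each statement's English description precedes it below -/
import Mathlib

section
/- (Existence in the well-ordered case, positive λ.) Let n ≥ 1 be a natural number, let α ∈ (4n−3, 4n−1), set ν = (1−α)/2, let 0 < η < 1, and let λ and δ satisfy (H_0): 0 < λ < j_{ν,1}², 0 < δ < 1, δ·η^ν·J_ν(η·√λ) − J_ν(√λ) ≥ 0, and J_{−ν}(√λ) − δ·η^ν·J_{−ν}(η·√λ) > 0. Suppose: (i) u₀ and v₀ are twice continuously differentiable on [0,1] with v₀(x) ≤ u₀(x) for all x ∈ [0,1], u₀ is an upper solution and v₀ is a lower solution; (ii) f is continuous on D₁ := {(x,y) : x ∈ [0,1], v₀(x) ≤ y ≤ u₀(x)}; (iii) there exists M₂ ≥ 0 such that for all (x,y), (x,w) ∈ D₁ with y ≤ w one has f(x,w) − f(x,y) ≥ M₂·(w − y); and (iv) M₂ − λ ≥ 0. Then there exist solutions v and u of the boundary value problem with v₀ ≤ v ≤ u ≤ u₀ on [0,1], and every solution z of the boundary value problem satisfying v₀ ≤ z ≤ u₀ on [0,1] satisfies v ≤ z ≤ u on [0,1]; in particular, the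 boundary value problem has at least one solution in D₁. -/
/-- The Bessel function of the first kind of real order `μ`. -/
noncomputable def besselJ (μ x : ℝ) : ℝ :=
  ∑' m : ℕ, ((-1 : ℝ) ^ m / ((m.factorial : ℝ) * Real.Gamma ((m : ℝ) + μ + 1))) *
    (x / 2) ^ (2 * (m : ℝ) + μ)

/-- `y` is a solution of the three-point singular BVP
`−(x^α y')' = x^α f(x, y)` on `(0,1)`, `y'(0) = 0`, `y(1) = δ·y(η)`:
`y` is continuous on `[0,1]`, continuously differentiable on `[0,1]`, twice
differentiable on `(0,1)`, satisfies the equation on `(0,1)` (with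
`(x^α y')' = α x^{α−1} y' + x^α y''`) and both boundary conditions. -/
def IsBVPSolution (α δ η : ℝ) (f : ℝ → ℝ → ℝ) (y : ℝ → ℝ) : Prop :=
  ContinuousOn y (Set.Icc 0 1) ∧
  (∀ x ∈ Set.Icc (0 : ℝ) 1, DifferentiableAt ℝ y x) ∧
  ContinuousOn (deriv y) (Set.Icc 0 1) ∧
  (∀ x ∈ Set.Ioo (0 : ℝ) 1, DifferentiableAt ℝ (deriv y) x) ∧
  (∀ x ∈ Set.Ioo (0 : ℝ) 1,
    -(α * x ^ (α - 1) * deriv y x + x ^ α * deriv (deriv y) x) = x ^ α * f x (y x)) ∧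
  deriv y 0 = 0 ∧ y 1 = δ * y η

/-- `u` is an upper solution of the three-point singular BVP: `u` is twice
continuously differentiable on `[0,1]`, `−(x^α u')' ≥ x^α f(x, u)` on `(0,1)`,
`u'(0) = 0` and `u(1) ≥ δ·u(η)`. -/
def IsUpperSolution (α δ η : ℝ) (f : ℝ → ℝ → ℝ) (u : ℝ → ℝ) : Prop :=
  (∀ x ∈ Set.Icc (0 : ℝ) 1, DifferentiableAt ℝ u x) ∧
  (∀ x ∈ Set.Icc (0 : ℝ) 1, DifferentiableAt ℝ (deriv u) x) ∧
  ContinuousOn (deriv (deriv u)) (Set.Icc 0 1) ∧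
  (∀ x ∈ Set.Ioo (0 : ℝ) 1,
    x ^ α * f x (u x) ≤ -(α * x ^ (α - 1) * deriv u x + x ^ α * deriv (deriv u) x)) ∧
  deriv u 0 = 0 ∧ δ * u η ≤ u 1

/-- `v` is a lower solution of the three-point singular BVP: `v` is twice
continuously differentiable on `[0,1]`, `−(x^α v')' ≤ x^α f(x, v)` on `(0,1)`,
`v'(0) = 0` and `v(1) ≤ δ·v(η)`. -/
def IsLowerSolution (α δ η : ℝ) (f : ℝ → ℝ → ℝ) (v : ℝ → ℝ) : Prop :=
  (∀ x ∈ Set.Icc (0 : ℝ) 1, DifferentiableAt ℝ v x) ∧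
  (∀ x ∈ Set.Icc (0 : ℝ) 1, DifferentiableAt ℝ (deriv v) x) ∧
  ContinuousOn (deriv (deriv v)) (Set.Icc 0 1) ∧
  (∀ x ∈ Set.Ioo (0 : ℝ) 1,
    -(α * x ^ (α - 1) * deriv v x + x ^ α * deriv (deriv v) x) ≤ x ^ α * f x (v x)) ∧
  deriv v 0 = 0 ∧ v 1 ≤ δ * v η

namespace BVPAux

/-- Regularity package. -/
def Reg (y : ℝ → ℝ) : Prop :=
  (∀ x ∈ Set.Icc (0 : ℝ) 1, DifferentiableAt ℝ y x) ∧
  ContinuousOn (deriv y) (Set.Icc 0 1) ∧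
  (∀ x ∈ Set.Ioo (0 : ℝ) 1, DifferentiableAt ℝ (deriv y) x) ∧ deriv y 0 = 0

noncomputable def Lop (α : ℝ) (y : ℝ → ℝ) (x : ℝ) : ℝ :=
  α * x ^ (α - 1) * deriv y x + x ^ α * deriv (deriv y) x

lemma cmp {α δ η : ℝ} (hα : 0 < α) (hη0 : 0 < η) (hη1 : η < 1) (hδ0 : 0 < δ) (hδ1 : δ < 1)
    {y1 y2 : ℝ → ℝ} (h1 : Reg y1) (h2 : Reg y2)
    (hL : ∀ x ∈ Set.Ioo (0 : ℝ) 1, Lop α y2 x ≤ Lop α y1 x)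
    (hb : y1 1 - δ * y1 η ≤ y2 1 - δ * y2 η) :
    ∀ x ∈ Set.Icc (0 : ℝ) 1, y1 x ≤ y2 x := by
  obtain ⟨d1, c1, e1, z1⟩ := h1
  obtain ⟨d2, c2, e2, z2⟩ := h2
  set g : ℝ → ℝ := fun x => x ^ α * (deriv y2 x - deriv y1 x) with hg
  have hgd : ∀ x ∈ Set.Ioo (0 : ℝ) 1, HasDerivAt g (Lop α y2 x - Lop α y1 x) x := by
    intro x hx
    have ha := Real.hasDerivAt_rpow_const (x := x) (p := α) (Or.inl hx.1.ne')
    have hb := ((e2 x hx).hasDerivAt.sub (e1 x hx).hasDerivAt)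
    refine (ha.mul hb).congr_deriv ?_
    simp only [Lop, Pi.sub_apply]; ring
  have hga : AntitoneOn g (Set.Icc 0 1) := by
    apply antitoneOn_of_deriv_nonpos (convex_Icc 0 1)
    · exact (Real.continuous_rpow_const hα.le).continuousOn.mul (c2.sub c1)
    · rw [interior_Icc]
      exact fun x hx => (hgd x hx).differentiableAt.differentiableWithinAt
    · rw [interior_Icc]
      intro x hx
      rw [(hgd x hx).deriv]; linarith [hL x hx]
  have hwa : AntitoneOn (fun x => y2 x - y1 x) (Set.Icc 0 1) := by
    apply antitoneOn_of_deriv_nonpos (convex_Icc 0 1)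
    · exact fun x hx => ((d2 x hx).sub (d1 x hx)).continuousAt.continuousWithinAt
    · exact fun x hx => ((d2 x (interior_subset hx)).sub
        (d1 x (interior_subset hx))).differentiableWithinAt
    · rw [interior_Icc]
      intro x hx
      have hx' := Set.Ioo_subset_Icc_self hx
      have hd : deriv (fun x => y2 x - y1 x) x = deriv y2 x - deriv y1 x :=
        ((d2 x hx').hasDerivAt.sub (d1 x hx').hasDerivAt).deriv
      rw [hd]
      have := hga (Set.left_mem_Icc.2 zero_le_one) hx' hx.1.le
      simp only [hg, z1, z2, sub_self, mul_zero] at this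
      by_contra hc
      push Not at hc
      have := mul_pos (Real.rpow_pos_of_pos hx.1 α) hc
      linarith
  intro x hx
  have a1 := hwa hx (Set.right_mem_Icc.2 zero_le_one) hx.2
  have a2 := hwa ⟨hη0.le, hη1.le⟩ (Set.right_mem_Icc.2 zero_le_one) hη1.le
  simp only at a1 a2
  have a3 : 0 ≤ y2 η - y1 η := by
    by_contra hc
    push Not at hc
    nlinarith
  nlinarith

noncomputable def G (α : ℝ) (h : ℝ → ℝ) (s : ℝ) : ℝ := s * ∫ r in (0:ℝ)..1, r ^ α * h (s * r)

noncomputable def I (α : ℝ) (h : ℝ → ℝ) (x : ℝ) : ℝ := ∫ s in (0:ℝ)..x, G α h s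

noncomputable def T (α δ η : ℝ) (h : ℝ → ℝ) (x : ℝ) : ℝ :=
  (I α h 1 - δ * I α h η) / (1 - δ) - I α h x

lemma G_cont {α : ℝ} (hα : 0 < α) {h : ℝ → ℝ} (hh : Continuous h) : Continuous (G α h) := by
  unfold G
  refine continuous_id.mul ?_
  apply intervalIntegral.continuous_parametric_intervalIntegral_of_continuous'
  have := Real.continuous_rpow_const hα.le
  exact (this.comp continuous_snd).mul (hh.comp (continuous_fst.mul continuous_snd))

lemma G_eq {α : ℝ} {h : ℝ → ℝ} {s : ℝ} (hs : 0 < s) :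
    s ^ α * G α h s = ∫ t in (0:ℝ)..s, t ^ α * h t := by
  have := intervalIntegral.mul_integral_comp_mul_left (a := 0) (b := 1)
    (f := fun t => t ^ α * h t) (c := s)
  simp only [mul_zero, mul_one] at this
  rw [← this, G, mul_left_comm, ← intervalIntegral.integral_const_mul]
  congr 1
  apply intervalIntegral.integral_congr
  intro r hr
  rw [Set.uIcc_of_le zero_le_one] at hr
  simp only
  rw [Real.mul_rpow hs.le hr.1]; ring

lemma T_hasDeriv {α δ η : ℝ} (hα : 0 < α) {h : ℝ → ℝ} (hh : Continuous h) (x : ℝ) :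
    HasDerivAt (T α δ η h) (-(G α h x)) x := by
  have hc := G_cont hα hh
  exact (intervalIntegral.integral_hasDerivAt_right (hc.intervalIntegrable _ _)
    (hc.stronglyMeasurableAtFilter _ _) hc.continuousAt).const_sub _

lemma T_deriv {α δ η : ℝ} (hα : 0 < α) {h : ℝ → ℝ} (hh : Continuous h) :
    deriv (T α δ η h) = fun x => -(G α h x) :=
  funext fun x => (T_hasDeriv hα hh x).deriv

lemma G_diff {α : ℝ} (hα : 0 < α) {h : ℝ → ℝ} (hh : Continuous h) {x : ℝ} (hx : 0 < x) :
    DifferentiableAt ℝ (G α h) x ∧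
      α * x ^ (α - 1) * G α h x + x ^ α * deriv (G α h) x = x ^ α * h x := by
  have hc : Continuous fun t : ℝ => t ^ α * h t := (Real.continuous_rpow_const hα.le).mul hh
  have hP : HasDerivAt (fun s => ∫ t in (0:ℝ)..s, t ^ α * h t) (x ^ α * h x) x :=
    intervalIntegral.integral_hasDerivAt_right (hc.intervalIntegrable _ _)
      (hc.stronglyMeasurableAtFilter _ _) hc.continuousAt
  have hpow := Real.hasDerivAt_rpow_const (x := x) (p := α) (Or.inl hx.ne')
  have hne : x ^ α ≠ 0 := (Real.rpow_pos_of_pos hx α).ne'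
  have hd : DifferentiableAt ℝ (G α h) x := by
    refine (hP.differentiableAt.div hpow.differentiableAt hne).congr_of_eventuallyEq ?_
    filter_upwards [lt_mem_nhds hx] with s hs
    have hne' : s ^ α ≠ 0 := (Real.rpow_pos_of_pos hs α).ne'
    simp only [Pi.div_apply]
    rw [← G_eq hs]; field_simp
  refine ⟨hd, ?_⟩
  refine (hpow.mul hd.hasDerivAt).unique (hP.congr_of_eventuallyEq ?_)
  filter_upwards [lt_mem_nhds hx] with s hs
  exact G_eq hs

lemma T_reg {α δ η : ℝ} (hα : 0 < α) {h : ℝ → ℝ} (hh : Continuous h) : Reg (T α δ η h) := by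
  refine ⟨fun x _ => (T_hasDeriv hα hh x).differentiableAt, ?_, ?_, ?_⟩
  · rw [T_deriv hα hh]; exact (G_cont hα hh).neg.continuousOn
  · intro x hx
    rw [T_deriv hα hh]; exact (G_diff hα hh hx.1).1.neg
  · rw [T_deriv hα hh]; simp [G]

lemma T_L {α δ η : ℝ} (hα : 0 < α) {h : ℝ → ℝ} (hh : Continuous h) {x : ℝ} (hx : 0 < x) :
    Lop α (T α δ η h) x = -(x ^ α * h x) := by
  have h2 : deriv (fun x => -(G α h x)) x = -deriv (G α h) x :=
    (G_diff hα hh hx).1.hasDerivAt.neg.deriv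
  rw [Lop, T_deriv hα hh, h2, ← (G_diff hα hh hx).2]; ring

lemma T_bc {α δ η : ℝ} (hδ1 : δ < 1) {h : ℝ → ℝ} : T α δ η h 1 = δ * T α δ η h η := by
  have : (1 - δ) ≠ 0 := by linarith
  unfold T; field_simp; ring

lemma G_bound {α : ℝ} (hα : 0 < α) {h : ℝ → ℝ} {K : ℝ} (hK : ∀ t, |h t| ≤ K) {s : ℝ}
    (hs : s ∈ Set.Icc (0:ℝ) 1) : |G α h s| ≤ K := by
  have hK0 : 0 ≤ K := (abs_nonneg _).trans (hK 0)
  have : ‖∫ r in (0:ℝ)..1, r ^ α * h (s * r)‖ ≤ K * |1 - 0| := by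
    apply intervalIntegral.norm_integral_le_of_norm_le_const
    intro r hr
    rw [Set.uIoc_of_le zero_le_one] at hr
    rw [norm_mul, Real.norm_eq_abs, Real.norm_eq_abs, abs_of_nonneg (Real.rpow_nonneg hr.1.le α)]
    calc r ^ α * |h (s * r)| ≤ 1 * K :=
          mul_le_mul (Real.rpow_le_one hr.1.le hr.2 hα.le) (hK _) (abs_nonneg _) zero_le_one
      _ = K := one_mul K
  rw [Real.norm_eq_abs] at this
  simp only [sub_zero, abs_one, mul_one] at this
  rw [G, abs_mul, abs_of_nonneg hs.1]
  calc s * _ ≤ 1 * K := mul_le_mul hs.2 this (abs_nonneg _) zero_le_one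
    _ = K := one_mul K

lemma T_lip {α δ η : ℝ} (hα : 0 < α) {h : ℝ → ℝ} (hh : Continuous h) {K : ℝ}
    (hK : ∀ t, |h t| ≤ K) {x y : ℝ} (hx : x ∈ Set.Icc (0:ℝ) 1) (hy : y ∈ Set.Icc (0:ℝ) 1) :
    |T α δ η h x - T α δ η h y| ≤ K * |x - y| := by
  have := (convex_Icc (0:ℝ) 1).norm_image_sub_le_of_norm_hasDerivWithin_le
    (f := T α δ η h) (f' := fun x => -(G α h x)) (C := K)
    (fun x _ => (T_hasDeriv hα hh x).hasDerivWithinAt)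
    (fun x hx => by rw [norm_neg]; exact G_bound hα hK hx) hy hx
  simpa using this

open Filter Topology in
lemma T_tendsto {α δ η : ℝ} (hα : 0 < α) (hη : η ∈ Set.Icc (0:ℝ) 1)
    {h : ℕ → ℝ → ℝ} {g : ℝ → ℝ} (hh : ∀ n, Continuous (h n)) {K : ℝ}
    (hK : ∀ n t, |h n t| ≤ K) (hlim : ∀ t, Tendsto (fun n => h n t) atTop (𝓝 (g t)))
    {x : ℝ} (hx : x ∈ Set.Icc (0:ℝ) 1) :
    Tendsto (fun n => T α δ η (h n) x) atTop (𝓝 (T α δ η g x)) := by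
  have hG : ∀ s, Tendsto (fun n => G α (h n) s) atTop (𝓝 (G α g s)) := by
    intro s
    refine Tendsto.const_mul s ?_
    refine intervalIntegral.tendsto_integral_filter_of_dominated_convergence (fun _ => K) ?_ ?_ ?_ ?_
    · refine Eventually.of_forall fun n => ?_
      exact ((Real.continuous_rpow_const hα.le).mul
        ((hh n).comp (continuous_const.mul continuous_id))).aestronglyMeasurable
    · refine Eventually.of_forall fun n => Eventually.of_forall fun r hr => ?_
      rw [Set.uIoc_of_le zero_le_one] at hr
      rw [norm_mul, Real.norm_eq_abs, Real.norm_eq_abs,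
        abs_of_nonneg (Real.rpow_nonneg hr.1.le α)]
      calc r ^ α * |h n (s * r)| ≤ 1 * K :=
            mul_le_mul (Real.rpow_le_one hr.1.le hr.2 hα.le) (hK _ _) (abs_nonneg _) zero_le_one
        _ = K := one_mul K
    · exact intervalIntegrable_const
    · exact Eventually.of_forall fun r _ => (hlim _).const_mul _
  have hI : ∀ x ∈ Set.Icc (0:ℝ) 1, Tendsto (fun n => I α (h n) x) atTop (𝓝 (I α g x)) := by
    intro x hx
    refine intervalIntegral.tendsto_integral_filter_of_dominated_convergence (fun _ => K) ?_ ?_ ?_ ?_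
    · exact Eventually.of_forall fun n => (G_cont hα (hh n)).aestronglyMeasurable
    · refine Eventually.of_forall fun n => Eventually.of_forall fun s hs => ?_
      rw [Set.uIoc_of_le hx.1] at hs
      exact G_bound hα (hK n) ⟨hs.1.le, hs.2.trans hx.2⟩
    · exact intervalIntegrable_const
    · exact Eventually.of_forall fun s _ => hG s
  exact (((hI 1 ⟨zero_le_one, le_rfl⟩).sub ((hI η hη).const_mul δ)).div_const _).sub (hI x hx)

/-- Clamp to the unit interval. -/
noncomputable def p (t : ℝ) : ℝ := max 0 (min 1 t)

lemma p_mem (t : ℝ) : p t ∈ Set.Icc (0:ℝ) 1 :=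
  ⟨le_max_left _ _, max_le zero_le_one (min_le_left _ _)⟩

lemma p_cont : Continuous p := by unfold p; fun_prop

lemma p_eq {t : ℝ} (ht : t ∈ Set.Icc (0:ℝ) 1) : p t = t := by
  unfold p; rw [min_eq_right ht.2, max_eq_right ht.1]

noncomputable def hh (f : ℝ → ℝ → ℝ) (w : ℝ → ℝ) (t : ℝ) : ℝ := f (p t) (w (p t))

noncomputable def seq (α δ η : ℝ) (f : ℝ → ℝ → ℝ) (v₀ : ℝ → ℝ) : ℕ → ℝ → ℝ
  | 0 => v₀
  | n + 1 => T α δ η (hh f (seq α δ η f v₀ n))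

lemma reg_cont {y : ℝ → ℝ} (h : Reg y) : ContinuousOn y (Set.Icc 0 1) :=
  fun x hx => (h.1 x hx).continuousAt.continuousWithinAt

open Filter Topology in
lemma min_sol {α δ η : ℝ} (hα : 0 < α) (hη0 : 0 < η) (hη1 : η < 1) (hδ0 : 0 < δ) (hδ1 : δ < 1)
    (f : ℝ → ℝ → ℝ) (u₀ v₀ : ℝ → ℝ) (ru : Reg u₀) (rv : Reg v₀)
    (Lu : ∀ x ∈ Set.Ioo (0 : ℝ) 1, x ^ α * f x (u₀ x) ≤ - Lop α u₀ x)
    (Lv : ∀ x ∈ Set.Ioo (0 : ℝ) 1, - Lop α v₀ x ≤ x ^ α * f x (v₀ x))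
    (bu : δ * u₀ η ≤ u₀ 1) (bv : v₀ 1 ≤ δ * v₀ η)
    (horder : ∀ x ∈ Set.Icc (0 : ℝ) 1, v₀ x ≤ u₀ x)
    (hfcont : ContinuousOn (fun p : ℝ × ℝ => f p.1 p.2)
      {p : ℝ × ℝ | p.1 ∈ Set.Icc (0 : ℝ) 1 ∧ v₀ p.1 ≤ p.2 ∧ p.2 ≤ u₀ p.1})
    (hmono : ∀ x ∈ Set.Icc (0 : ℝ) 1, ∀ y w : ℝ, v₀ x ≤ y → y ≤ w → w ≤ u₀ x → f x y ≤ f x w) :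
    ∃ v, IsBVPSolution α δ η f v ∧ (∀ x ∈ Set.Icc (0 : ℝ) 1, v₀ x ≤ v x ∧ v x ≤ u₀ x) ∧
      ∀ z, IsBVPSolution α δ η f z → (∀ x ∈ Set.Icc (0 : ℝ) 1, v₀ x ≤ z x ∧ z x ≤ u₀ x) →
        ∀ x ∈ Set.Icc (0 : ℝ) 1, v x ≤ z x := by
  have hcont : ∀ w : ℝ → ℝ, ContinuousOn w (Set.Icc 0 1) →
      (∀ x ∈ Set.Icc (0 : ℝ) 1, v₀ x ≤ w x ∧ w x ≤ u₀ x) → Continuous (hh f w) := by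
    intro w hw hb
    have h1 : Continuous fun t => (p t, w (p t)) :=
      p_cont.prodMk (hw.comp_continuous p_cont p_mem)
    exact hfcont.comp_continuous h1 (fun t => ⟨p_mem t, hb _ (p_mem t)⟩)
  obtain ⟨K, hK⟩ : ∃ K, ∀ w : ℝ → ℝ, (∀ x ∈ Set.Icc (0 : ℝ) 1, v₀ x ≤ w x ∧ w x ≤ u₀ x) →
      ∀ t, |hh f w t| ≤ K := by
    have cu := hcont u₀ (reg_cont ru) (fun x hx => ⟨horder x hx, le_rfl⟩)
    have cv := hcont v₀ (reg_cont rv) (fun x hx => ⟨le_rfl, horder x hx⟩)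
    obtain ⟨A, hA⟩ := isCompact_Icc.exists_bound_of_continuousOn (cu.continuousOn (s := Set.Icc 0 1))
    obtain ⟨B, hB⟩ := isCompact_Icc.exists_bound_of_continuousOn (cv.continuousOn (s := Set.Icc 0 1))
    refine ⟨max A B, fun w hw t => ?_⟩
    have hpt := p_mem t
    have a := abs_le.1 (hA _ hpt)
    have b := abs_le.1 (hB _ hpt)
    simp only [hh, p_eq hpt] at a b ⊢
    have c := hmono _ hpt _ _ le_rfl (hw _ hpt).1 (hw _ hpt).2
    have d := hmono _ hpt _ _ (hw _ hpt).1 (hw _ hpt).2 le_rfl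
    rw [abs_le]
    constructor
    · linarith [le_max_right A B]
    · linarith [le_max_left A B]
  -- comparison facts for one step
  have step_le : ∀ w z : ℝ → ℝ, ContinuousOn w (Set.Icc 0 1) →
      (∀ x ∈ Set.Icc (0 : ℝ) 1, v₀ x ≤ w x ∧ w x ≤ u₀ x) → Reg z →
      (∀ x ∈ Set.Icc (0 : ℝ) 1, z x ≤ u₀ x) →
      (∀ x ∈ Set.Ioo (0 : ℝ) 1, x ^ α * f x (z x) ≤ - Lop α z x) → δ * z η ≤ z 1 →
      (∀ x ∈ Set.Icc (0 : ℝ) 1, w x ≤ z x) →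
      ∀ x ∈ Set.Icc (0 : ℝ) 1, T α δ η (hh f w) x ≤ z x := by
    intro w z hw hb rz hzu hz hbz hwz
    have hc := hcont w hw hb
    refine cmp hα hη0 hη1 hδ0 hδ1 (T_reg hα hc) rz ?_ ?_
    · intro x hx
      have hx' := Set.Ioo_subset_Icc_self hx
      rw [T_L hα hc hx.1]
      simp only [hh, p_eq hx']
      have := mul_le_mul_of_nonneg_left (hmono x hx' _ _ (hb x hx').1 (hwz x hx') (hzu x hx'))
        (Real.rpow_nonneg hx.1.le α)
      linarith [hz x hx]
    · rw [T_bc hδ1]; linarith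
  have step_ge : ∀ w z : ℝ → ℝ, ContinuousOn w (Set.Icc 0 1) →
      (∀ x ∈ Set.Icc (0 : ℝ) 1, v₀ x ≤ w x ∧ w x ≤ u₀ x) → Reg z →
      (∀ x ∈ Set.Icc (0 : ℝ) 1, v₀ x ≤ z x) →
      (∀ x ∈ Set.Ioo (0 : ℝ) 1, - Lop α z x ≤ x ^ α * f x (z x)) → z 1 ≤ δ * z η →
      (∀ x ∈ Set.Icc (0 : ℝ) 1, z x ≤ w x) →
      ∀ x ∈ Set.Icc (0 : ℝ) 1, z x ≤ T α δ η (hh f w) x := by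
    intro w z hw hb rz hzu hz hbz hwz
    have hc := hcont w hw hb
    refine cmp hα hη0 hη1 hδ0 hδ1 rz (T_reg hα hc) ?_ ?_
    · intro x hx
      have hx' := Set.Ioo_subset_Icc_self hx
      rw [T_L hα hc hx.1]
      simp only [hh, p_eq hx']
      have := mul_le_mul_of_nonneg_left (hmono x hx' _ _ (hzu x hx') (hwz x hx') (hb x hx').2)
        (Real.rpow_nonneg hx.1.le α)
      linarith [hz x hx]
    · rw [T_bc hδ1]; linarith
  set W := seq α δ η f v₀ with hW
  have W0 : W 0 = v₀ := rfl
  have WS : ∀ n, W (n + 1) = T α δ η (hh f (W n)) := fun n => rfl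
  have inv : ∀ n, Reg (W n) ∧ (∀ x ∈ Set.Icc (0 : ℝ) 1, v₀ x ≤ W n x ∧ W n x ≤ u₀ x) := by
    intro n
    induction n with
    | zero => exact ⟨rv, fun x hx => ⟨le_rfl, horder x hx⟩⟩
    | succ n ih =>
      obtain ⟨r, b⟩ := ih
      rw [WS]
      refine ⟨T_reg hα (hcont _ (reg_cont r) b), fun x hx => ⟨?_, ?_⟩⟩
      · exact step_ge _ v₀ (reg_cont r) b rv (fun _ _ => le_rfl) Lv bv (fun x hx => (b x hx).1) x hx
      · exact step_le _ u₀ (reg_cont r) b ru (fun _ _ => le_rfl) Lu bu (fun x hx => (b x hx).2) x hx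
  have hc : ∀ n, Continuous (hh f (W n)) := fun n => hcont _ (reg_cont (inv n).1) (inv n).2
  have mono : ∀ n, ∀ x ∈ Set.Icc (0 : ℝ) 1, W n x ≤ W (n + 1) x := by
    intro n
    induction n with
    | zero => intro x hx; exact ((inv 1).2 x hx).1
    | succ n ih =>
      rw [WS (n + 1)]
      refine step_ge _ _ (reg_cont (inv _).1) (inv _).2 (inv _).1 (fun x hx => ((inv _).2 x hx).1)
        ?_ ?_ (fun _ _ => le_rfl)
      · intro x hx
        have hx' := Set.Ioo_subset_Icc_self hx
        have e : Lop α (W (n + 1)) x = -(x ^ α * hh f (W n) x) := T_L hα (hc n) hx.1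
        rw [e]
        simp only [hh, p_eq hx']
        have := mul_le_mul_of_nonneg_left (hmono x hx' _ _ ((inv n).2 x hx').1 (ih x hx')
          ((inv (n+1)).2 x hx').2) (Real.rpow_nonneg hx.1.le α)
        linarith
      · exact (T_bc hδ1).le
  set w : ℝ → ℝ := fun x => ⨆ n, W n x with hw
  have hlim : ∀ x ∈ Set.Icc (0 : ℝ) 1, Tendsto (fun n => W n x) atTop (𝓝 (w x)) := by
    intro x hx
    refine tendsto_atTop_ciSup (monotone_nat_of_le_succ fun n => mono n x hx) ?_
    exact ⟨u₀ x, by rintro _ ⟨n, rfl⟩; exact ((inv n).2 x hx).2⟩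
  have wb : ∀ x ∈ Set.Icc (0 : ℝ) 1, v₀ x ≤ w x ∧ w x ≤ u₀ x := fun x hx =>
    ⟨ge_of_tendsto' (hlim x hx) fun n => ((inv n).2 x hx).1,
      le_of_tendsto' (hlim x hx) fun n => ((inv n).2 x hx).2⟩
  have wlip : ∀ x ∈ Set.Icc (0 : ℝ) 1, ∀ y ∈ Set.Icc (0 : ℝ) 1, |w x - w y| ≤ K * |x - y| := by
    intro x hx y hy
    refine le_of_tendsto' (((hlim x hx).comp (tendsto_add_atTop_nat 1)).sub
      ((hlim y hy).comp (tendsto_add_atTop_nat 1))).abs fun n => ?_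
    exact T_lip hα (hc n) (hK _ (inv n).2) hx hy
  have wc : ContinuousOn w (Set.Icc 0 1) := by
    have : LipschitzOnWith K.toNNReal w (Set.Icc 0 1) := by
      refine LipschitzOnWith.of_dist_le_mul fun x hx y hy => ?_
      rw [Real.dist_eq, Real.dist_eq]
      exact (wlip x hx y hy).trans
        (mul_le_mul_of_nonneg_right (Real.le_coe_toNNReal K) (abs_nonneg _))
    exact this.continuousOn
  have hcw := hcont w wc wb
  have hfix : ∀ x ∈ Set.Icc (0 : ℝ) 1, w x = T α δ η (hh f w) x := by
    intro x hx
    have h1 : Tendsto (fun n => W (n + 1) x) atTop (𝓝 (T α δ η (hh f w) x)) := by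
      refine T_tendsto hα ⟨hη0.le, hη1.le⟩ hc (fun n => hK _ (inv n).2) ?_ hx
      intro t
      have hpt := p_mem t
      have hcw := hfcont (p t, w (p t)) ⟨hpt, wb _ hpt⟩
      refine hcw.tendsto.comp (tendsto_nhdsWithin_iff.2 ⟨?_, ?_⟩) (x := atTop)
        (f := fun n => (p t, W n (p t)))
      · exact tendsto_const_nhds.prodMk_nhds (hlim _ hpt)
      · exact Eventually.of_forall fun n => ⟨hpt, (inv n).2 _ hpt⟩
    exact tendsto_nhds_unique ((hlim x hx).comp (tendsto_add_atTop_nat 1)) h1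
  have rT := T_reg (δ := δ) (η := η) hα hcw
  refine ⟨T α δ η (hh f w), ⟨reg_cont rT, rT.1, rT.2.1, rT.2.2.1, ?_, rT.2.2.2, T_bc hδ1⟩, ?_, ?_⟩
  · intro x hx
    have hx' := Set.Ioo_subset_Icc_self hx
    have e := T_L (δ := δ) (η := η) hα hcw hx.1
    rw [Lop] at e
    rw [e, ← hfix x hx']
    simp only [hh, p_eq hx', neg_neg]
  · intro x hx
    rw [← hfix x hx]; exact wb x hx
  · intro z hz hzb x hx
    rw [← hfix x hx]
    obtain ⟨_, z1, z2, z3, z4, z5, z6⟩ := hz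
    have : ∀ n, ∀ x ∈ Set.Icc (0 : ℝ) 1, W n x ≤ z x := by
      intro n
      induction n with
      | zero => exact fun x hx => (hzb x hx).1
      | succ n ih =>
        exact step_le _ z (reg_cont (inv n).1) (inv n).2 ⟨z1, z2, z3, z5⟩ (fun x hx => (hzb x hx).2)
          (fun x hx => (z4 x hx).ge) z6.ge ih
    exact le_of_tendsto' (hlim x hx) fun n => this n x hx

lemma deriv_neg_fun (y : ℝ → ℝ) : deriv (fun x => -y x) = fun x => -deriv y x := by
  funext x; exact deriv.fun_neg

lemma Lop_neg (α : ℝ) (y : ℝ → ℝ) (x : ℝ) : Lop α (fun x => -y x) x = -Lop α y x := by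
  simp only [Lop, deriv_neg_fun]; ring

lemma reg_neg {y : ℝ → ℝ} (h : Reg y) : Reg (fun x => -y x) := by
  obtain ⟨a, b, c, d⟩ := h
  refine ⟨fun x hx => (a x hx).neg, ?_, ?_, ?_⟩
  · rw [deriv_neg_fun]; exact b.neg
  · rw [deriv_neg_fun]; exact fun x hx => (c x hx).neg
  · rw [deriv_neg_fun]; simp [d]

lemma sol_neg {α δ η : ℝ} {f : ℝ → ℝ → ℝ} {y : ℝ → ℝ} (h : IsBVPSolution α δ η f y) :
    IsBVPSolution α δ η (fun x t => -f x (-t)) (fun x => -y x) := by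
  obtain ⟨a, b, c, d, e, g, k⟩ := h
  have r := reg_neg ⟨b, c, d, g⟩
  refine ⟨a.neg, r.1, r.2.1, r.2.2.1, ?_, r.2.2.2, by simp only [k]; ring⟩
  intro x hx
  have h1 := Lop_neg α y x
  have h2 := e x hx
  simp only [Lop] at h1
  rw [h1]
  simp only [neg_neg]
  linarith

end BVPAux

/-- **Theorem 5.2 (existence, well-ordered case, positive `λ`).**
For `α ∈ (4n−3, 4n−1)`, `ν = (1−α)/2`, `0 < η < 1`, with `λ, δ` satisfying
`(H₀)`, an upper solution `u₀` and lower solution `v₀` with `v₀ ≤ u₀`, `f`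
continuous on `D₁ = {(x,y) : x ∈ [0,1], v₀(x) ≤ y ≤ u₀(x)}` and one-sided
Lipschitz from below with constant `M₂ ≥ 0`, `M₂ − λ ≥ 0`: there are solutions
`v, u` with `v₀ ≤ v ≤ u ≤ u₀`, and every solution `z` in `D₁` satisfies
`v ≤ z ≤ u`. -/
theorem existence_well_ordered_pos_lambda (n : ℕ) (hn : 1 ≤ n) (α lam δ η ν : ℝ)
    (hα1 : 4 * (n : ℝ) - 3 < α) (hα2 : α < 4 * (n : ℝ) - 1)
    (hν : ν = (1 - α) / 2)
    (hη0 : 0 < η) (hη1 : η < 1)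
    (hlam : 0 < lam)
    (hzero : ∀ t : ℝ, 0 < t → t ≤ Real.sqrt lam → besselJ ν t ≠ 0)
    (hδ0 : 0 < δ) (hδ1 : δ < 1)
    (hH1 : 0 ≤ δ * η ^ ν * besselJ ν (η * Real.sqrt lam) - besselJ ν (Real.sqrt lam))
    (hH2 : 0 < besselJ (-ν) (Real.sqrt lam)
        - δ * η ^ ν * besselJ (-ν) (η * Real.sqrt lam))
    (f : ℝ → ℝ → ℝ) (u₀ v₀ : ℝ → ℝ)
    (hu₀ : IsUpperSolution α δ η f u₀) (hv₀ : IsLowerSolution α δ η f v₀)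
    (horder : ∀ x ∈ Set.Icc (0 : ℝ) 1, v₀ x ≤ u₀ x)
    (hfcont : ContinuousOn (fun p : ℝ × ℝ => f p.1 p.2)
      {p : ℝ × ℝ | p.1 ∈ Set.Icc (0 : ℝ) 1 ∧ v₀ p.1 ≤ p.2 ∧ p.2 ≤ u₀ p.1})
    (M₂ : ℝ) (hM₂ : 0 ≤ M₂)
    (hlip : ∀ x ∈ Set.Icc (0 : ℝ) 1, ∀ y w : ℝ,
      v₀ x ≤ y → y ≤ u₀ x → v₀ x ≤ w → w ≤ u₀ x → y ≤ w →
        M₂ * (w - y) ≤ f x w - f x y)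
    (hMlam : 0 ≤ M₂ - lam) :
    ∃ v u : ℝ → ℝ, IsBVPSolution α δ η f v ∧ IsBVPSolution α δ η f u ∧
      (∀ x ∈ Set.Icc (0 : ℝ) 1, v₀ x ≤ v x ∧ v x ≤ u x ∧ u x ≤ u₀ x) ∧
      ∀ z : ℝ → ℝ, IsBVPSolution α δ η f z →
        (∀ x ∈ Set.Icc (0 : ℝ) 1, v₀ x ≤ z x ∧ z x ≤ u₀ x) →
        ∀ x ∈ Set.Icc (0 : ℝ) 1, v x ≤ z x ∧ z x ≤ u x := by
  have hn' : (1:ℝ) ≤ n := by exact_mod_cast hn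
  have hα : 0 < α := by linarith
  obtain ⟨u1, u2, u3, u4, u5, u6⟩ := hu₀
  obtain ⟨v1, v2, v3, v4, v5, v6⟩ := hv₀
  have ru : BVPAux.Reg u₀ := ⟨u1, fun x hx => (u2 x hx).continuousAt.continuousWithinAt,
    fun x hx => u2 x (Set.Ioo_subset_Icc_self hx), u5⟩
  have rv : BVPAux.Reg v₀ := ⟨v1, fun x hx => (v2 x hx).continuousAt.continuousWithinAt,
    fun x hx => v2 x (Set.Ioo_subset_Icc_self hx), v5⟩
  have hmono : ∀ x ∈ Set.Icc (0 : ℝ) 1, ∀ y w : ℝ, v₀ x ≤ y → y ≤ w → w ≤ u₀ x →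
      f x y ≤ f x w := by
    intro x hx y w h1 h2 h3
    have := hlip x hx y w h1 (h2.trans h3) (h1.trans h2) h3 h2
    have := mul_nonneg hM₂ (sub_nonneg.2 h2)
    linarith
  obtain ⟨v, sv, bv, mv⟩ := BVPAux.min_sol hα hη0 hη1 hδ0 hδ1 f u₀ v₀ ru rv u4 v4 u6 v6
    horder hfcont hmono
  obtain ⟨u, su, bu, mu⟩ := BVPAux.min_sol hα hη0 hη1 hδ0 hδ1 (fun x t => -f x (-t))
    (fun x => -v₀ x) (fun x => -u₀ x) (BVPAux.reg_neg rv) (BVPAux.reg_neg ru)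
    (by
      intro x hx
      have h1 : -BVPAux.Lop α v₀ x ≤ _ := v4 x hx
      rw [BVPAux.Lop_neg]
      simp only [neg_neg] at h1 ⊢
      linarith)
    (by
      intro x hx
      have h1 : _ ≤ -BVPAux.Lop α u₀ x := u4 x hx
      rw [BVPAux.Lop_neg]
      simp only [neg_neg] at h1 ⊢
      linarith)
    (by linarith) (by linarith)
    (fun x hx => neg_le_neg (horder x hx))
    (by
      have hc : Continuous fun q : ℝ × ℝ => (q.1, -q.2) := by fun_prop
      refine (hfcont.comp hc.continuousOn ?_).neg
      rintro ⟨a, b⟩ ⟨h1, h2, h3⟩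
      refine ⟨h1, ?_, ?_⟩ <;> simp only at h2 h3 ⊢ <;> linarith)
    (by
      intro x hx y w h1 h2 h3
      exact neg_le_neg (hmono x hx (-w) (-y) (by linarith) (by linarith) (by linarith)))
  have su' : IsBVPSolution α δ η f (fun x => -u x) := by
    have := BVPAux.sol_neg su
    simpa only [neg_neg] using this
  have bu' : ∀ x ∈ Set.Icc (0 : ℝ) 1, v₀ x ≤ -u x ∧ -u x ≤ u₀ x := fun x hx =>
    ⟨by linarith [(bu x hx).2], by linarith [(bu x hx).1]⟩
  refine ⟨v, fun x => -u x, sv, su', fun x hx => ⟨(bv x hx).1, mv _ su' bu' x hx, (bu' x hx).2⟩, ?_⟩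
  intro z sz bz x hx
  refine ⟨mv z sz bz x hx, ?_⟩
  have := mu (fun x => -z x) (BVPAux.sol_neg sz)
    (fun x hx => ⟨neg_le_neg (bz x hx).2, neg_le_neg (bz x hx).1⟩) x hx
  linarith
end

section
/- (Existence in the well-ordered case, negative λ.) Let α ≥ 1, set ν = (1−α)/2, let 0 < η < 1, let λ < 0, and suppose (H_0') holds: δ > 0, K_ν(√|λ|) − δ·η^ν·K_ν(η·√|λ|) ≤ 0, and I_{−ν}(√|λ|) − δ·η^ν·I_{−ν}(η·√|λ|) > 0. Suppose: (i) u₀ and v₀ are twice continuously differentiable on [0,1] with v₀(x) ≤ u₀(x) for all x ∈ [0,1], u₀ is an upper solution and v₀ is a lower solution; (ii) f is continuous on D₂ := {(x,y) : x ∈ [0,1], v₀(x) ≤ y ≤ u₀(x)}; (iii) there exists M₃ ≥ 0 such that for all (x,ỹ), (x,w̃) ∈ D₂ with ỹ ≤ w̃ one has f(x,w̃) − f(x,ỹ) ≥ −M₃·(w̃ − ỹ); and (iv) M₃ + λ ≤ 0. Then there exist solutions v and u of the boundary value problem with v₀ ≤ v ≤ u ≤ u₀ on [0,1], and every solution z of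 the boundary value problem satisfying v₀ ≤ z ≤ u₀ on [0,1] satisfies v ≤ z ≤ u on [0,1]; in particular, the boundary value problem has at least one solution in D₂. -/
/-- The modified Bessel function of the first kind of real order `μ`. -/
noncomputable def besselI (μ x : ℝ) : ℝ :=
  ∑' m : ℕ, (1 / ((m.factorial : ℝ) * Real.Gamma ((m : ℝ) + μ + 1))) *
    (x / 2) ^ (2 * (m : ℝ) + μ)

/-- The modified Bessel function of the second kind of real order `μ`,
`K_μ(x) = ∫_0^∞ e^{−x·cosh t}·cosh(μt) dt`. -/
noncomputable def besselK (μ x : ℝ) : ℝ :=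
  ∫ t in Set.Ioi (0 : ℝ), Real.exp (-(x * Real.cosh t)) * Real.cosh (μ * t)

noncomputable def bC (μ z : ℝ) : ℝ :=
  ∑' m : ℕ, (1 / ((m.factorial : ℝ) * Real.Gamma ((m : ℝ) + μ + 1))) * z ^ m

lemma gamma_lb (μ : ℝ) (hμ : 0 ≤ μ) (m : ℕ) :
    Real.Gamma (μ + 1) ≤ Real.Gamma ((m : ℝ) + μ + 1) := by
  induction m with
  | zero => simp
  | succ k ih =>
    have hk : (0 : ℝ) ≤ k := Nat.cast_nonneg k
    have hne : (k : ℝ) + μ + 1 ≠ 0 := by positivity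
    rw [show ((k + 1 : ℕ) : ℝ) + μ + 1 = ((k : ℝ) + μ + 1) + 1 by push_cast; ring,
      Real.Gamma_add_one hne]
    have : 0 < Real.Gamma ((k : ℝ) + μ + 1) := Real.Gamma_pos_of_pos (by positivity)
    nlinarith [mul_nonneg (add_nonneg hk hμ) this.le]

lemma bC_term_bound (μ : ℝ) (hμ : 0 ≤ μ) (m : ℕ) (z R : ℝ) (hz : |z| ≤ R) :
    ‖(1 / ((m.factorial : ℝ) * Real.Gamma ((m : ℝ) + μ + 1))) * z ^ m‖
      ≤ (1 / Real.Gamma (μ + 1)) * (R ^ m / (m.factorial : ℝ)) := by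
  have h0 : 0 < Real.Gamma (μ + 1) := Real.Gamma_pos_of_pos (by positivity)
  have h1 := gamma_lb μ hμ m
  have hf : (0 : ℝ) < m.factorial := by exact_mod_cast m.factorial_pos
  rw [norm_mul, norm_pow, Real.norm_eq_abs z, Real.norm_of_nonneg (by positivity)]
  have h2 : |z| ^ m ≤ R ^ m := by gcongr
  calc 1 / ((m.factorial : ℝ) * Real.Gamma ((m : ℝ) + μ + 1)) * |z| ^ m
      ≤ 1 / ((m.factorial : ℝ) * Real.Gamma (μ + 1)) * R ^ m := by gcongr
    _ = _ := by field_simp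

lemma bC_summable (μ : ℝ) (hμ : 0 ≤ μ) (z : ℝ) :
    Summable fun m : ℕ => (1 / ((m.factorial : ℝ) * Real.Gamma ((m : ℝ) + μ + 1))) * z ^ m :=
  Summable.of_norm_bounded ((Real.summable_pow_div_factorial |z|).mul_left _)
    fun m => bC_term_bound μ hμ m z |z| le_rfl

lemma bC_pos (μ : ℝ) (hμ : 0 ≤ μ) (z : ℝ) (hz : 0 ≤ z) : 0 < bC μ z := by
  refine (bC_summable μ hμ z).tsum_pos (fun m => ?_) 0 ?_
  · have : 0 < Real.Gamma ((m : ℝ) + μ + 1) := Real.Gamma_pos_of_pos (by positivity)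
    positivity
  · have : 0 < Real.Gamma (((0 : ℕ) : ℝ) + μ + 1) := Real.Gamma_pos_of_pos (by positivity)
    simp at this ⊢
    exact this

lemma bC_coef (μ : ℝ) (m : ℕ) :
    (1 / (((m + 1).factorial : ℝ) * Real.Gamma (((m + 1 : ℕ) : ℝ) + μ + 1))) * ((m + 1 : ℕ) : ℝ)
    = 1 / ((m.factorial : ℝ) * Real.Gamma ((m : ℝ) + (μ + 1) + 1)) := by
  rw [Nat.factorial_succ, show ((m + 1 : ℕ) : ℝ) + μ + 1 = (m : ℝ) + (μ + 1) + 1 by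
    push_cast; ring]
  push_cast
  have : (m : ℝ) + 1 ≠ 0 := by positivity
  rw [one_div, one_div, mul_assoc ((m : ℝ) + 1), mul_inv ((m : ℝ) + 1)]
  field_simp

lemma bC_hasDerivAt (μ : ℝ) (hμ : 0 ≤ μ) (z : ℝ) : HasDerivAt (bC μ) (bC (μ + 1) z) z := by
  set a : ℕ → ℝ := fun m => 1 / ((m.factorial : ℝ) * Real.Gamma ((m : ℝ) + μ + 1)) with ha
  have key : ∀ (m : ℕ) (y : ℝ), a (m + 1) * (((m + 1 : ℕ) : ℝ) * y ^ m)
      = (1 / ((m.factorial : ℝ) * Real.Gamma ((m : ℝ) + (μ + 1) + 1))) * y ^ m := by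
    intro m y
    rw [← mul_assoc, ← bC_coef]
  have hb : HasDerivAt (fun y => ∑' m : ℕ, a (m + 1) * y ^ (m + 1))
      (∑' m : ℕ, a (m + 1) * (((m + 1 : ℕ) : ℝ) * z ^ m)) z := by
    refine hasDerivAt_tsum_of_isPreconnected (t := Metric.ball 0 (|z| + 1)) (y₀ := 0)
      (u := fun m : ℕ => (1 / Real.Gamma (μ + 1 + 1)) * ((|z| + 1) ^ m / (m.factorial : ℝ)))
      (g := fun (m : ℕ) (y : ℝ) => a (m + 1) * y ^ (m + 1))
      (g' := fun (m : ℕ) (y : ℝ) => a (m + 1) * (((m + 1 : ℕ) : ℝ) * y ^ m))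
      ((Real.summable_pow_div_factorial _).mul_left _) Metric.isOpen_ball
      (convex_ball _ _).isPreconnected ?_ ?_ ?_ ?_ ?_
    · intro n y _
      exact (hasDerivAt_pow (n + 1) y).const_mul _
    · intro n y hy
      simp only [key]
      refine bC_term_bound (μ + 1) (by positivity) n y _ ?_
      rw [mem_ball_zero_iff, Real.norm_eq_abs] at hy
      exact hy.le
    · simp; positivity
    · simp
    · simp
  have e : bC μ = fun y => a 0 + ∑' m : ℕ, a (m + 1) * y ^ (m + 1) := by
    funext y
    have := (bC_summable μ hμ y).tsum_eq_zero_add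
    simpa [bC, ha] using this
  rw [e]
  have e2 : bC (μ + 1) z = ∑' m : ℕ, a (m + 1) * (((m + 1 : ℕ) : ℝ) * z ^ m) := by
    simp only [key]; rfl
  rw [e2]
  exact hb.const_add _

lemma bC_rec (μ : ℝ) (hμ : 0 ≤ μ) (z : ℝ) :
    z * bC (μ + 1 + 1) z + (μ + 1) * bC (μ + 1) z = bC μ z := by
  have hG : ∀ m : ℕ, 0 < Real.Gamma ((m : ℝ) + μ + 1) := fun m =>
    Real.Gamma_pos_of_pos (by positivity)
  have s2 := bC_summable (μ + 1 + 1) (by positivity) z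
  have s1 := bC_summable (μ + 1) (by positivity) z
  have s0 := bC_summable μ hμ z
  have t1 := s1.tsum_eq_zero_add
  have t0 := s0.tsum_eq_zero_add
  have s1' := (summable_nat_add_iff 1).2 s1
  unfold bC
  rw [t1, t0, ← tsum_mul_left, mul_add, ← tsum_mul_left, add_left_comm,
    ← (s2.mul_left z).tsum_add (s1'.mul_left (μ + 1))]
  congr 1
  · simp
    rw [Real.Gamma_add_one (by positivity)]
    field_simp
  · refine tsum_congr fun m => ?_
    have e1 : ((m : ℝ) + (μ + 1 + 1) + 1) = ((m : ℝ) + 1 + μ + 1) + 1 := by ring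
    have e2 : (((m + 1 : ℕ) : ℝ) + (μ + 1) + 1) = ((m : ℝ) + 1 + μ + 1) + 1 := by push_cast; ring
    have e3 : (((m + 1 : ℕ) : ℝ) + μ + 1) = ((m : ℝ) + 1 + μ + 1) := by push_cast; ring
    rw [e1, e2, e3, Real.Gamma_add_one (by positivity), Nat.factorial_succ]
    have := (hG (m + 1)).ne'
    rw [e3] at this
    have h4 : (m : ℝ) + 1 + μ + 1 ≠ 0 := by positivity
    push_cast
    field_simp
    ring

lemma besselI_eq (μ x : ℝ) (hx : 0 < x) : besselI μ x = (x / 2) ^ μ * bC μ ((x / 2) ^ 2) := by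
  unfold besselI bC
  rw [← tsum_mul_left]
  refine tsum_congr fun m => ?_
  rw [Real.rpow_add (by positivity), ← pow_mul,
    show (2 * (m : ℝ)) = ((2 * m : ℕ) : ℝ) by push_cast; ring, Real.rpow_natCast]
  ring

/-- The regular solution of the linear equation. -/
lemma exists_phi (α lam δ η ν : ℝ) (hα : 1 ≤ α) (hν : ν = (1 - α) / 2) (hη0 : 0 < η)
    (hlam : lam < 0)
    (hH2 : 0 < besselI (-ν) (Real.sqrt |lam|)
        - δ * η ^ ν * besselI (-ν) (η * Real.sqrt |lam|)) :
    ∃ φ φ1 φ2 : ℝ → ℝ, (∀ x, HasDerivAt φ (φ1 x) x) ∧ (∀ x, HasDerivAt φ1 (φ2 x) x) ∧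
      (∀ x, x * φ2 x + α * φ1 x = (-lam) * x * φ x) ∧ (∀ x, 0 < φ x) ∧ δ * φ η < φ 1 := by
  set k := Real.sqrt |lam| with hk
  have hk0 : 0 < k := Real.sqrt_pos.2 (abs_pos.2 hlam.ne)
  have hk2 : k ^ 2 = -lam := by rw [hk, Real.sq_sqrt (abs_nonneg _), abs_of_neg hlam]
  have hμ : 0 ≤ -ν := by rw [hν]; linarith
  obtain ⟨μ, hμe⟩ : ∃ μ, μ = -ν := ⟨_, rfl⟩
  have hαμ : α = 2 * μ + 1 := by rw [hμe, hν]; ring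
  have hνμ : ν = -μ := by rw [hμe]; ring
  rw [← hμe] at hμ hH2
  have hz : ∀ x : ℝ, HasDerivAt (fun x => (k * x / 2) ^ 2) (k ^ 2 * x / 2) x := by
    intro x
    refine ((((hasDerivAt_id x).const_mul k).div_const 2).pow 2).congr_deriv ?_
    simp only [id]
    norm_num
    ring
  refine ⟨fun x => bC μ ((k * x / 2) ^ 2), fun x => bC (μ + 1) ((k * x / 2) ^ 2) * (k ^ 2 * x / 2),
    fun x => bC (μ + 1 + 1) ((k * x / 2) ^ 2) * (k ^ 2 * x / 2) * (k ^ 2 * x / 2)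
      + bC (μ + 1) ((k * x / 2) ^ 2) * (k ^ 2 / 2), ?_, ?_, ?_, ?_, ?_⟩
  · intro x
    exact (bC_hasDerivAt μ hμ _).comp x (hz x)
  · intro x
    refine ((bC_hasDerivAt (μ + 1) (by positivity) _).comp x (hz x)).mul ?_
    have := ((hasDerivAt_id x).const_mul (k ^ 2)).div_const 2
    simpa using this
  · intro x
    have := bC_rec μ hμ ((k * x / 2) ^ 2)
    beta_reduce
    rw [← this, ← hk2, hαμ]
    ring
  · intro x
    exact bC_pos μ hμ _ (by positivity)
  · rw [besselI_eq μ k hk0, besselI_eq μ (η * k) (by positivity), hνμ,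
      show η * k / 2 = η * (k / 2) by ring, Real.mul_rpow hη0.le (by positivity),
      Real.rpow_neg hη0.le] at hH2
    have hημ : 0 < η ^ μ := Real.rpow_pos_of_pos hη0 _
    have hkμ : 0 < (k / 2) ^ μ := Real.rpow_pos_of_pos (by positivity) _
    have e : (k / 2) ^ μ * bC μ ((k / 2) ^ 2) - δ * (η ^ μ)⁻¹ *
        (η ^ μ * (k / 2) ^ μ * bC μ ((η * (k / 2)) ^ 2))
        = (k / 2) ^ μ * (bC μ ((k / 2) ^ 2) - δ * bC μ ((η * (k / 2)) ^ 2)) := by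
      field_simp
    rw [e] at hH2
    have := pos_of_mul_pos_right hH2 hkμ.le
    beta_reduce
    rw [mul_one, show k * η / 2 = η * (k / 2) by ring]
    linarith

/-- Comparison principle. -/
lemma cmp_principle (α κ δ η : ℝ) (hα : 1 ≤ α) (hη0 : 0 < η) (hη1 : η < 1) (hδ : 0 < δ)
    (φ φ1 φ2 : ℝ → ℝ) (h1 : ∀ x, HasDerivAt φ (φ1 x) x) (h2 : ∀ x, HasDerivAt φ1 (φ2 x) x)
    (h3 : ∀ x, x * φ2 x + α * φ1 x = κ * x * φ x) (hpos : ∀ x, 0 < φ x)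
    (hδφ : δ * φ η < φ 1) (a b : ℝ → ℝ)
    (ha : ∀ x ∈ Set.Icc (0 : ℝ) 1, DifferentiableAt ℝ a x)
    (ha1 : ContinuousOn (deriv a) (Set.Icc 0 1))
    (ha2 : ∀ x ∈ Set.Ioo (0 : ℝ) 1, DifferentiableAt ℝ (deriv a) x)
    (hb : ∀ x ∈ Set.Icc (0 : ℝ) 1, DifferentiableAt ℝ b x)
    (hb1 : ContinuousOn (deriv b) (Set.Icc 0 1))
    (hb2 : ∀ x ∈ Set.Ioo (0 : ℝ) 1, DifferentiableAt ℝ (deriv b) x)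
    (hab : ∀ x ∈ Set.Ioo (0 : ℝ) 1,
      -(α * x ^ (α - 1) * deriv a x + x ^ α * deriv (deriv a) x) + κ * x ^ α * a x ≤
      -(α * x ^ (α - 1) * deriv b x + x ^ α * deriv (deriv b) x) + κ * x ^ α * b x)
    (hbc : a 1 - δ * a η ≤ b 1 - δ * b η) :
    ∀ x ∈ Set.Icc (0 : ℝ) 1, a x ≤ b x := by
  have hc : Continuous φ := continuous_iff_continuousAt.2 fun x => (h1 x).continuousAt
  have hc1 : Continuous φ1 := continuous_iff_continuousAt.2 fun x => (h2 x).continuousAt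
  have hac : ContinuousOn a (Set.Icc 0 1) := fun x hx => (ha x hx).continuousAt.continuousWithinAt
  have hbcn : ContinuousOn b (Set.Icc 0 1) := fun x hx => (hb x hx).continuousAt.continuousWithinAt
  set W : ℝ → ℝ := fun x => x ^ α * (φ x * (deriv b x - deriv a x) - φ1 x * (b x - a x)) with hW
  have hWc : ContinuousOn W (Set.Icc 0 1) := by
    have : Continuous fun x : ℝ => x ^ α := Real.continuous_rpow_const (by linarith)
    exact this.continuousOn.mul ((hc.continuousOn.mul (hb1.sub ha1)).sub
      (hc1.continuousOn.mul (hbcn.sub hac)))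
  have hWanti : AntitoneOn W (Set.Icc 0 1) := by
    have hd : ∀ x ∈ Set.Ioo (0 : ℝ) 1, HasDerivAt W
        (α * x ^ (α - 1) * (φ x * (deriv b x - deriv a x) - φ1 x * (b x - a x)) +
         x ^ α * ((φ1 x * (deriv b x - deriv a x) + φ x * (deriv (deriv b) x - deriv (deriv a) x))
          - (φ2 x * (b x - a x) + φ1 x * (deriv b x - deriv a x)))) x := by
      intro x hx
      have hx' := Set.Ioo_subset_Icc_self hx
      have e := Real.hasDerivAt_rpow_const (x := x) (p := α) (Or.inl hx.1.ne')
      exact e.mul (((h1 x).mul ((hb2 x hx).hasDerivAt.sub (ha2 x hx).hasDerivAt)).sub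
        ((h2 x).mul ((hb x hx').hasDerivAt.sub (ha x hx').hasDerivAt)))
    refine antitoneOn_of_deriv_nonpos (convex_Icc 0 1) hWc ?_ ?_
    · rw [interior_Icc]
      exact fun x hx => (hd x hx).differentiableAt.differentiableWithinAt
    · rw [interior_Icc]
      intro x hx
      rw [(hd x hx).deriv]
      have hxa : x ^ α = x ^ (α - 1) * x := by
        rw [← Real.rpow_add_one hx.1.ne']; congr 1; ring
      have e1 := hab x hx
      have e2 := mul_le_mul_of_nonneg_left e1 (hpos x).le
      have e3 := h3 x
      rw [hxa] at e2 ⊢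
      have e4 : x ^ (α - 1) * (b x - a x) * (x * φ2 x + α * φ1 x)
        = x ^ (α - 1) * (b x - a x) * (κ * x * φ x) := by rw [e3]
      nlinarith [e2, e4]
  have hW0 : ∀ x ∈ Set.Icc (0 : ℝ) 1, W x ≤ 0 := by
    intro x hx
    have := hWanti (Set.left_mem_Icc.2 zero_le_one) hx hx.1
    refine this.trans (le_of_eq ?_)
    simp [hW, Real.zero_rpow (by linarith : α ≠ 0)]
  have hwanti : AntitoneOn (fun x => (b x - a x) / φ x) (Set.Icc 0 1) := by
    have hd : ∀ x ∈ Set.Ioo (0 : ℝ) 1, HasDerivAt (fun x => (b x - a x) / φ x)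
        (((deriv b x - deriv a x) * φ x - (b x - a x) * φ1 x) / φ x ^ 2) x := by
      intro x hx
      have hx' := Set.Ioo_subset_Icc_self hx
      exact ((hb x hx').hasDerivAt.sub (ha x hx').hasDerivAt).div (h1 x) (hpos x).ne'
    refine antitoneOn_of_deriv_nonpos (convex_Icc 0 1)
      ((hbcn.sub hac).div hc.continuousOn fun x _ => (hpos x).ne') ?_ ?_
    · rw [interior_Icc]
      exact fun x hx => (hd x hx).differentiableAt.differentiableWithinAt
    · rw [interior_Icc]
      intro x hx
      rw [(hd x hx).deriv]
      have e := hW0 x (Set.Ioo_subset_Icc_self hx)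
      have hxp : 0 < x ^ α := Real.rpow_pos_of_pos hx.1 _
      have e2 : φ x * (deriv b x - deriv a x) - φ1 x * (b x - a x) ≤ 0 := by
        by_contra hcon
        push Not at hcon
        exact absurd e (not_le.2 (mul_pos hxp hcon))
      refine div_nonpos_of_nonpos_of_nonneg ?_ (sq_nonneg _)
      linarith
  have hw1 : 0 ≤ (b 1 - a 1) / φ 1 := by
    have e := hwanti ⟨hη0.le, hη1.le⟩ (Set.right_mem_Icc.2 zero_le_one) hη1.le
    simp only at e
    by_contra hcon
    push Not at hcon
    have p1 := hpos 1
    have pη := hpos η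
    set w1 := (b 1 - a 1) / φ 1 with hw1
    set wη := (b η - a η) / φ η with hwη
    have q1 : b 1 - a 1 = w1 * φ 1 := by rw [hw1]; field_simp
    have q2 : b η - a η = wη * φ η := by rw [hwη]; field_simp
    have r1 : δ * (wη * φ η) ≤ w1 * φ 1 := by rw [← q1, ← q2]; linarith
    have r2 : δ * φ η * w1 ≤ δ * φ η * wη := mul_le_mul_of_nonneg_left e (by positivity)
    nlinarith
  intro x hx
  have e := hwanti hx (Set.right_mem_Icc.2 zero_le_one) hx.2
  have e2 : 0 ≤ (b x - a x) / φ x := hw1.trans e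
  have := mul_nonneg e2 (hpos x).le
  rw [div_mul_cancel₀ _ (hpos x).ne'] at this
  linarith

noncomputable def qF (α : ℝ) (φ h : ℝ → ℝ) (s : ℝ) : ℝ :=
  s / φ s ^ 2 * ∫ r in (0 : ℝ)..1, r ^ α * φ (s * r) * h (s * r)

noncomputable def GF (α : ℝ) (φ h : ℝ → ℝ) (x : ℝ) : ℝ := ∫ s in x..1, qF α φ h s

noncomputable def TF (α δ η : ℝ) (φ h : ℝ → ℝ) (x : ℝ) : ℝ :=
  φ x * (δ * φ η * GF α φ h η / (φ 1 - δ * φ η) + GF α φ h x)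

lemma qF_cont (α : ℝ) (hα : 1 ≤ α) (φ h : ℝ → ℝ) (hφ : Continuous φ) (hpos : ∀ x, 0 < φ x)
    (hh : Continuous h) : Continuous (qF α φ h) := by
  unfold qF
  refine (continuous_id.div (hφ.pow 2) fun x => pow_ne_zero 2 (hpos x).ne').mul ?_
  apply intervalIntegral.continuous_parametric_intervalIntegral_of_continuous'
  have : Continuous fun x : ℝ => x ^ α := Real.continuous_rpow_const (by linarith)
  have h1 : Continuous fun p : ℝ × ℝ => p.1 * p.2 := by fun_prop
  exact ((this.comp continuous_snd).mul (hφ.comp h1)).mul (hh.comp h1)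

lemma TF_spec (α κ δ η : ℝ) (hα : 1 ≤ α)
    (φ φ1 φ2 : ℝ → ℝ) (h1 : ∀ x, HasDerivAt φ (φ1 x) x) (h2 : ∀ x, HasDerivAt φ1 (φ2 x) x)
    (h3 : ∀ x, x * φ2 x + α * φ1 x = κ * x * φ x) (hpos : ∀ x, 0 < φ x)
    (hδφ : δ * φ η < φ 1) (h : ℝ → ℝ) (hh : Continuous h) :
    (∀ x, DifferentiableAt ℝ (TF α δ η φ h) x) ∧
    Continuous (deriv (TF α δ η φ h)) ∧
    (∀ x ∈ Set.Ioo (0 : ℝ) 1, DifferentiableAt ℝ (deriv (TF α δ η φ h)) x) ∧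
    (∀ x ∈ Set.Ioo (0 : ℝ) 1,
      -(α * x ^ (α - 1) * deriv (TF α δ η φ h) x + x ^ α * deriv (deriv (TF α δ η φ h)) x)
       + κ * x ^ α * TF α δ η φ h x = x ^ α * h x) ∧
    deriv (TF α δ η φ h) 0 = 0 ∧ TF α δ η φ h 1 = δ * TF α δ η φ h η := by
  have hc : Continuous φ := continuous_iff_continuousAt.2 fun x => (h1 x).continuousAt
  have hc1 : Continuous φ1 := continuous_iff_continuousAt.2 fun x => (h2 x).continuousAt
  have hq := qF_cont α hα φ h hc hpos hh
  set q := qF α φ h with hqdef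
  set c := δ * φ η * GF α φ h η / (φ 1 - δ * φ η) with hcdef
  have hG : ∀ x, HasDerivAt (GF α φ h) (-q x) x := fun x =>
    intervalIntegral.integral_hasDerivAt_left (hq.intervalIntegrable _ _)
      (hq.stronglyMeasurableAtFilter _ _) hq.continuousAt
  have hw : ∀ x, HasDerivAt (fun x => c + GF α φ h x) (-q x) x := fun x => (hG x).const_add c
  have hT : ∀ x, HasDerivAt (TF α δ η φ h) (φ1 x * (c + GF α φ h x) + φ x * (-q x)) x :=
    fun x => (h1 x).mul (hw x)
  have hdT : deriv (TF α δ η φ h) = fun x => φ1 x * (c + GF α φ h x) + φ x * (-q x) :=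
    funext fun x => (hT x).deriv
  have hGc : Continuous (GF α φ h) := continuous_iff_continuousAt.2 fun x => (hG x).continuousAt
  have hφ10 : φ1 0 = 0 := by
    have := h3 0
    simp at this
    rcases this with h | h
    · linarith
    · exact h
  have hra : Continuous fun x : ℝ => x ^ α := Real.continuous_rpow_const (by linarith)
  -- the flux
  set g : ℝ → ℝ := fun t => t ^ α * φ t * h t with hg
  have hgc : Continuous g := (hra.mul hc).mul hh
  set P : ℝ → ℝ := fun x => ∫ t in (0 : ℝ)..x, g t with hP
  have hPd : ∀ x, HasDerivAt P (g x) x := fun x => by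
    exact intervalIntegral.integral_hasDerivAt_right (hgc.intervalIntegrable _ _)
      (hgc.stronglyMeasurableAtFilter _ _) hgc.continuousAt
  have hqP : ∀ x, 0 < x → q x = P x / (x ^ α * φ x ^ 2) := by
    intro x hx
    have hxp : 0 < x ^ α := Real.rpow_pos_of_pos hx _
    have e : P x = x ^ α * (x * ∫ r in (0 : ℝ)..1, r ^ α * φ (x * r) * h (x * r)) := by
      have e1 := intervalIntegral.mul_integral_comp_mul_left (a := 0) (b := 1) (f := g) x
      rw [mul_zero, mul_one] at e1
      simp only [hP]
      rw [← e1, mul_left_comm, ← intervalIntegral.integral_const_mul (x ^ α)]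
      congr 1
      apply intervalIntegral.integral_congr
      intro r hr
      rw [Set.uIcc_of_le zero_le_one] at hr
      simp only [hg]
      rw [Real.mul_rpow hx.le hr.1]
      ring
    have := (hpos x).ne'
    rw [e, hqdef, qF]
    field_simp
  have hqd : ∀ x, 0 < x → ∃ q', HasDerivAt q q' x ∧
      α * x ^ (α - 1) * φ x ^ 2 * q x + x ^ α * (2 * φ x * φ1 x) * q x + x ^ α * φ x ^ 2 * q'
        = g x := by
    intro x hx
    have hxp : 0 < x ^ α := Real.rpow_pos_of_pos hx _
    have hφx := hpos x
    have e := Real.hasDerivAt_rpow_const (x := x) (p := α) (Or.inl hx.ne')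
    have e2 : HasDerivAt (fun x => x ^ α * φ x ^ 2)
        (α * x ^ (α - 1) * φ x ^ 2 + x ^ α * (2 * φ x * φ1 x)) x := by
      refine (e.mul ((h1 x).pow 2)).congr_deriv ?_
      simp
    have e3 := (hPd x).div e2 (by positivity)
    have e4 : HasDerivAt q _ x := e3.congr_of_eventuallyEq (by
      filter_upwards [lt_mem_nhds hx] with y hy using hqP y hy)
    refine ⟨_, e4, ?_⟩
    have e5 : P x = q x * (x ^ α * φ x ^ 2) := by rw [hqP x hx]; field_simp
    rw [e5]
    field_simp
    ring
  have hd2 : ∀ x, 0 < x → ∃ q', HasDerivAt (deriv (TF α δ η φ h))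
      (φ2 x * (c + GF α φ h x) + φ1 x * (-q x) + (φ1 x * (-q x) + φ x * (-q'))) x ∧
      α * x ^ (α - 1) * φ x ^ 2 * q x + x ^ α * (2 * φ x * φ1 x) * q x + x ^ α * φ x ^ 2 * q'
        = g x := by
    intro x hx
    obtain ⟨q', hq', hq'e⟩ := hqd x hx
    refine ⟨q', ?_, hq'e⟩
    rw [hdT]
    exact ((h2 x).mul (hw x)).add ((h1 x).mul hq'.neg)
  refine ⟨fun x => (hT x).differentiableAt, ?_, ?_, ?_, ?_, ?_⟩
  · rw [hdT]
    exact (hc1.mul (continuous_const.add hGc)).add (hc.mul hq.neg)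
  · intro x hx
    obtain ⟨q', hq', _⟩ := hd2 x hx.1
    exact hq'.differentiableAt
  · intro x hx
    obtain ⟨q', hq', hqe⟩ := hd2 x hx.1
    rw [hq'.deriv, (hT x).deriv]
    have hTx : TF α δ η φ h x = φ x * (c + GF α φ h x) := rfl
    rw [hTx]
    have hxa : x ^ α = x ^ (α - 1) * x := by
      rw [← Real.rpow_add_one hx.1.ne']; congr 1; ring
    have e3 := h3 x
    simp only [hg] at hqe
    have hφx := (hpos x).ne'
    have hqe2 : α * x ^ (α - 1) * φ x * q x + x ^ α * (2 * φ1 x) * q x + x ^ α * φ x * q'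
        = x ^ α * h x := by
      apply mul_left_cancel₀ hφx
      linear_combination hqe
    rw [hxa] at hqe2 ⊢
    linear_combination hqe2 - x ^ (α - 1) * (c + GF α φ h x) * e3
  · rw [(hT 0).deriv, hφ10, hqdef, qF]
    simp
  · have h1G : GF α φ h 1 = 0 := by simp [GF]
    have e1 : TF α δ η φ h 1 = φ 1 * (c + GF α φ h 1) := rfl
    have e2 : TF α δ η φ h η = φ η * (c + GF α φ h η) := rfl
    rw [e1, e2, h1G]
    have : φ 1 - δ * φ η ≠ 0 := by linarith
    have e3 : c * (φ 1 - δ * φ η) = δ * φ η * GF α φ h η := by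
      rw [hcdef]; field_simp
    linear_combination e3

lemma qF_inner_bound (α : ℝ) (hα : 1 ≤ α) (φ : ℝ → ℝ) (hφ : Continuous φ) (hpos : ∀ x, 0 < φ x)
    (B : ℝ) : ∃ Φ : ℝ, ∀ h : ℝ → ℝ, (∀ x ∈ Set.Icc (0 : ℝ) 1, |h x| ≤ B) →
      ∀ s ∈ Set.Icc (0 : ℝ) 1, ∀ r ∈ Set.Icc (0 : ℝ) 1,
        |r ^ α * φ (s * r) * h (s * r)| ≤ Φ := by
  obtain ⟨Φ, hΦ⟩ := isCompact_Icc.exists_bound_of_continuousOn (hφ.continuousOn (s := Set.Icc (0 : ℝ) 1))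
  refine ⟨Φ * B, fun h hh s hs r hr => ?_⟩
  have hsr : s * r ∈ Set.Icc (0 : ℝ) 1 :=
    ⟨mul_nonneg hs.1 hr.1, mul_le_one₀ hs.2 hr.1 hr.2⟩
  have e1 := hΦ _ hsr
  have e2 := hh _ hsr
  rw [Real.norm_eq_abs] at e1
  have e3 : |r ^ α| ≤ 1 := by
    rw [abs_of_nonneg (Real.rpow_nonneg hr.1 _)]
    exact Real.rpow_le_one hr.1 hr.2 (by linarith)
  rw [abs_mul, abs_mul]
  have e4 : |r ^ α| * |φ (s * r)| ≤ 1 * Φ := mul_le_mul e3 e1 (abs_nonneg _) zero_le_one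
  rw [one_mul] at e4
  exact mul_le_mul e4 e2 (abs_nonneg _) ((abs_nonneg _).trans e1)

lemma qF_bound (α : ℝ) (hα : 1 ≤ α) (φ : ℝ → ℝ) (hφ : Continuous φ) (hpos : ∀ x, 0 < φ x)
    (B : ℝ) : ∃ C : ℝ, ∀ h : ℝ → ℝ, (∀ x ∈ Set.Icc (0 : ℝ) 1, |h x| ≤ B) →
      ∀ s ∈ Set.Icc (0 : ℝ) 1, |qF α φ h s| ≤ C := by
  obtain ⟨Φ, hΦ⟩ := qF_inner_bound α hα φ hφ hpos B
  have hD : Continuous fun s : ℝ => s / φ s ^ 2 :=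
    continuous_id.div (hφ.pow 2) fun x => pow_ne_zero 2 (hpos x).ne'
  obtain ⟨D, hD⟩ := isCompact_Icc.exists_bound_of_continuousOn
    (hD.continuousOn (s := Set.Icc (0 : ℝ) 1))
  refine ⟨D * Φ, fun h hh s hs => ?_⟩
  unfold qF
  rw [abs_mul]
  have e1 := hD s hs
  rw [Real.norm_eq_abs] at e1
  have e2 := intervalIntegral.norm_integral_le_of_norm_le_const (a := 0) (b := 1) (C := Φ)
    (f := fun r : ℝ => r ^ α * φ (s * r) * h (s * r)) (by
      intro r hr
      rw [Set.uIoc_of_le zero_le_one] at hr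
      exact hΦ h hh s hs r ⟨hr.1.le, hr.2⟩)
  rw [Real.norm_eq_abs] at e2
  simp only [sub_zero, abs_one, mul_one] at e2
  exact mul_le_mul e1 e2 (abs_nonneg _) ((abs_nonneg _).trans e1)

lemma TF_lip (α δ η : ℝ) (hα : 1 ≤ α) (φ : ℝ → ℝ) (hφ : Continuous φ)
    (hpos : ∀ x, 0 < φ x) (h : ℝ → ℝ) (hh : Continuous h) (C : ℝ)
    (hC : ∀ s ∈ Set.Icc (0 : ℝ) 1, |qF α φ h s| ≤ C) :
    ∀ x ∈ Set.Icc (0 : ℝ) 1, ∀ y ∈ Set.Icc (0 : ℝ) 1,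
      |TF α δ η φ h x / φ x - TF α δ η φ h y / φ y| ≤ C * |x - y| := by
  intro x hx y hy
  have hq := qF_cont α hα φ h hφ hpos hh
  unfold TF
  rw [mul_div_cancel_left₀ _ (hpos x).ne', mul_div_cancel_left₀ _ (hpos y).ne',
    add_sub_add_left_eq_sub]
  unfold GF
  have e : (∫ s in x..1, qF α φ h s) - ∫ s in y..1, qF α φ h s = ∫ s in x..y, qF α φ h s := by
    rw [← intervalIntegral.integral_add_adjacent_intervals (hq.intervalIntegrable x y)
      (hq.intervalIntegrable y 1)]
    ring
  rw [e, abs_sub_comm x y, ← Real.norm_eq_abs]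
  refine intervalIntegral.norm_integral_le_of_norm_le_const fun s hs => ?_
  exact hC s (Set.uIcc_subset_Icc hx hy (Set.uIoc_subset_uIcc hs))

lemma TF_tendsto (α δ η : ℝ) (hα : 1 ≤ α) (hη0 : 0 < η) (hη1 : η < 1) (φ : ℝ → ℝ)
    (hφ : Continuous φ)
    (hpos : ∀ x, 0 < φ x) (B : ℝ) (hn : ℕ → ℝ → ℝ) (h : ℝ → ℝ)
    (hnc : ∀ n, Continuous (hn n)) (hB : ∀ n, ∀ x ∈ Set.Icc (0 : ℝ) 1, |hn n x| ≤ B)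
    (hlim : ∀ x ∈ Set.Icc (0 : ℝ) 1, Filter.Tendsto (fun n => hn n x) Filter.atTop (nhds (h x))) :
    ∀ x ∈ Set.Icc (0 : ℝ) 1, Filter.Tendsto (fun n => TF α δ η φ (hn n) x) Filter.atTop
      (nhds (TF α δ η φ h x)) := by
  obtain ⟨Φ, hΦ⟩ := qF_inner_bound α hα φ hφ hpos B
  obtain ⟨C, hC⟩ := qF_bound α hα φ hφ hpos B
  have hra : Continuous fun x : ℝ => x ^ α := Real.continuous_rpow_const (by linarith)
  have hq : ∀ s ∈ Set.Icc (0 : ℝ) 1, Filter.Tendsto (fun n => qF α φ (hn n) s) Filter.atTop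
      (nhds (qF α φ h s)) := by
    intro s hs
    unfold qF
    refine Filter.Tendsto.const_mul _ ?_
    refine intervalIntegral.tendsto_integral_filter_of_dominated_convergence (fun _ => Φ) ?_ ?_ ?_ ?_
    · refine Filter.Eventually.of_forall fun n => ?_
      have hm : Continuous fun r : ℝ => s * r := by fun_prop
      exact ((hra.mul (hφ.comp hm)).mul ((hnc n).comp hm)).aestronglyMeasurable
    · refine Filter.Eventually.of_forall fun n => MeasureTheory.ae_of_all _ fun r hr => ?_
      rw [Set.uIoc_of_le zero_le_one] at hr
      exact hΦ _ (hB n) s hs r ⟨hr.1.le, hr.2⟩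
    · exact intervalIntegrable_const
    · refine MeasureTheory.ae_of_all _ fun r hr => ?_
      rw [Set.uIoc_of_le zero_le_one] at hr
      refine Filter.Tendsto.const_mul _ (hlim _ ?_)
      exact ⟨mul_nonneg hs.1 hr.1.le, mul_le_one₀ hs.2 hr.1.le hr.2⟩
  have hG : ∀ x ∈ Set.Icc (0 : ℝ) 1, Filter.Tendsto (fun n => GF α φ (hn n) x) Filter.atTop
      (nhds (GF α φ h x)) := by
    intro x hx
    unfold GF
    refine intervalIntegral.tendsto_integral_filter_of_dominated_convergence (fun _ => C) ?_ ?_ ?_ ?_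
    · exact Filter.Eventually.of_forall fun n =>
        (qF_cont α hα φ _ hφ hpos (hnc n)).aestronglyMeasurable
    · refine Filter.Eventually.of_forall fun n => MeasureTheory.ae_of_all _ fun r hr => ?_
      rw [Set.uIoc_of_le hx.2] at hr
      exact hC _ (hB n) r ⟨hx.1.trans hr.1.le, hr.2⟩
    · exact intervalIntegrable_const
    · refine MeasureTheory.ae_of_all _ fun r hr => ?_
      rw [Set.uIoc_of_le hx.2] at hr
      exact hq r ⟨hx.1.trans hr.1.le, hr.2⟩
  intro x hx
  unfold TF
  exact ((((hG η ⟨hη0.le, hη1.le⟩).const_mul _).div_const _).add (hG x hx)).const_mul _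

lemma lim_fix (α δ η : ℝ) (hα : 1 ≤ α) (hη0 : 0 < η) (hη1 : η < 1) (φ : ℝ → ℝ)
    (hφ : Continuous φ) (hpos : ∀ x, 0 < φ x) (B : ℝ) (H : (ℝ → ℝ) → ℝ → ℝ)
    (Hc : ∀ y, ContinuousOn y (Set.Icc 0 1) → Continuous (H y))
    (Hb : ∀ y x, |H y x| ≤ B)
    (Hl : ∀ (yn : ℕ → ℝ → ℝ) (y : ℝ → ℝ),
      (∀ x ∈ Set.Icc (0 : ℝ) 1, Filter.Tendsto (fun n => yn n x) Filter.atTop (nhds (y x))) →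
      ∀ x ∈ Set.Icc (0 : ℝ) 1, Filter.Tendsto (fun n => H (yn n) x) Filter.atTop (nhds (H y x)))
    (yn : ℕ → ℝ → ℝ) (hyc : ∀ n, ContinuousOn (yn n) (Set.Icc 0 1))
    (hrec : ∀ n, yn (n + 1) = TF α δ η φ (H (yn n))) (y : ℝ → ℝ)
    (hlim : ∀ x ∈ Set.Icc (0 : ℝ) 1,
      Filter.Tendsto (fun n => yn n x) Filter.atTop (nhds (y x))) :
    ContinuousOn y (Set.Icc 0 1) ∧ ∀ x ∈ Set.Icc (0 : ℝ) 1, TF α δ η φ (H y) x = y x := by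
  obtain ⟨C, hC⟩ := qF_bound α hα φ hφ hpos B
  have hlim1 : ∀ x ∈ Set.Icc (0 : ℝ) 1,
      Filter.Tendsto (fun n => yn (n + 1) x) Filter.atTop (nhds (y x)) := fun x hx =>
    (Filter.tendsto_add_atTop_iff_nat 1).2 (hlim x hx)
  have hw : ∀ x ∈ Set.Icc (0 : ℝ) 1, ∀ z ∈ Set.Icc (0 : ℝ) 1,
      |y x / φ x - y z / φ z| ≤ C * |x - z| := by
    intro x hx z hz
    refine le_of_tendsto (((hlim1 x hx).div_const _).sub ((hlim1 z hz).div_const _)).abs ?_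
    refine Filter.Eventually.of_forall fun n => ?_
    simp only [hrec]
    exact TF_lip α δ η hα φ hφ hpos _ (Hc _ (hyc n)) C (hC _ fun x _ => Hb _ x) x hx z hz
  have hwc : ContinuousOn (fun x => y x / φ x) (Set.Icc 0 1) := by
    have hl : LipschitzOnWith (Real.toNNReal C) (fun x => y x / φ x) (Set.Icc 0 1) := by
      refine LipschitzOnWith.of_dist_le_mul fun x hx z hz => ?_
      rw [Real.dist_eq, Real.dist_eq]
      refine (hw x hx z hz).trans ?_
      exact mul_le_mul_of_nonneg_right (Real.le_coe_toNNReal C) (abs_nonneg _)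
    exact hl.continuousOn
  have hyc' : ContinuousOn y (Set.Icc 0 1) := by
    refine (hwc.mul hφ.continuousOn).congr fun x _ => ?_
    rw [Pi.mul_apply, div_mul_cancel₀ _ (hpos x).ne']
  refine ⟨hyc', fun x hx => ?_⟩
  have := TF_tendsto α δ η hα hη0 hη1 φ hφ hpos B (fun n => H (yn n)) (H y)
    (fun n => Hc _ (hyc n)) (fun n x _ => Hb _ x) (Hl yn y hlim) x hx
  refine tendsto_nhds_unique this ?_
  simpa only [hrec] using hlim1 x hx

lemma proj_mem (x : ℝ) : max 0 (min 1 x) ∈ Set.Icc (0 : ℝ) 1 :=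
  ⟨le_max_left _ _, max_le zero_le_one (min_le_left _ _)⟩

lemma proj_eq (x : ℝ) (hx : x ∈ Set.Icc (0 : ℝ) 1) : max 0 (min 1 x) = x := by
  rw [min_eq_right hx.2, max_eq_right hx.1]

lemma exists_H (κ : ℝ) (f : ℝ → ℝ → ℝ) (u₀ v₀ : ℝ → ℝ)
    (hu : ContinuousOn u₀ (Set.Icc 0 1)) (hv : ContinuousOn v₀ (Set.Icc 0 1))
    (horder : ∀ x ∈ Set.Icc (0 : ℝ) 1, v₀ x ≤ u₀ x)
    (hfcont : ContinuousOn (fun p : ℝ × ℝ => f p.1 p.2)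
      {p : ℝ × ℝ | p.1 ∈ Set.Icc (0 : ℝ) 1 ∧ v₀ p.1 ≤ p.2 ∧ p.2 ≤ u₀ p.1})
    (M₃ : ℝ)
    (hlip : ∀ x ∈ Set.Icc (0 : ℝ) 1, ∀ y w : ℝ,
      v₀ x ≤ y → y ≤ u₀ x → v₀ x ≤ w → w ≤ u₀ x → y ≤ w →
        -(M₃ * (w - y)) ≤ f x w - f x y)
    (hMκ : M₃ ≤ κ) :
    ∃ (H : (ℝ → ℝ) → ℝ → ℝ) (B : ℝ),
      (∀ y, ContinuousOn y (Set.Icc 0 1) → Continuous (H y)) ∧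
      (∀ y x, |H y x| ≤ B) ∧
      (∀ (yn : ℕ → ℝ → ℝ) (y : ℝ → ℝ),
        (∀ x ∈ Set.Icc (0 : ℝ) 1, Filter.Tendsto (fun n => yn n x) Filter.atTop (nhds (y x))) →
        ∀ x ∈ Set.Icc (0 : ℝ) 1,
          Filter.Tendsto (fun n => H (yn n) x) Filter.atTop (nhds (H y x))) ∧
      (∀ a b : ℝ → ℝ, (∀ x ∈ Set.Icc (0 : ℝ) 1, a x ≤ b x) → ∀ x, H a x ≤ H b x) ∧
      (∀ (y : ℝ → ℝ), ∀ x ∈ Set.Icc (0 : ℝ) 1, v₀ x ≤ y x → y x ≤ u₀ x →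
        H y x = f x (y x) + κ * y x) := by
  set c : ℝ → ℝ → ℝ := fun x y => max (v₀ x) (min (u₀ x) y) with hc
  set g : ℝ × ℝ → ℝ := fun p => f p.1 (c p.1 p.2) + κ * c p.1 p.2 with hg
  have hc1 : ∀ x ∈ Set.Icc (0 : ℝ) 1, ∀ y, v₀ x ≤ c x y ∧ c x y ≤ u₀ x := fun x hx y =>
    ⟨le_max_left _ _, max_le (horder x hx) (min_le_left _ _)⟩
  have hc2 : ∀ x y, v₀ x ≤ y → y ≤ u₀ x → c x y = y := fun x y h1 h2 => by
    simp only [hc]; rw [min_eq_right h2, max_eq_right h1]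
  have hgc : ContinuousOn g (Set.Icc (0 : ℝ) 1 ×ˢ Set.univ) := by
    have m1 : Set.MapsTo (fun p : ℝ × ℝ => p.1) (Set.Icc (0 : ℝ) 1 ×ˢ Set.univ) (Set.Icc 0 1) :=
      fun p hp => hp.1
    have hcc : ContinuousOn (fun p : ℝ × ℝ => c p.1 p.2) (Set.Icc (0 : ℝ) 1 ×ˢ Set.univ) := by
      refine ContinuousOn.sup (hv.comp continuousOn_fst m1) ?_
      exact ContinuousOn.inf (hu.comp continuousOn_fst m1) continuousOn_snd
    refine ContinuousOn.add ?_ (hcc.const_smul κ)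
    refine hfcont.comp (f := fun p : ℝ × ℝ => (p.1, c p.1 p.2)) (continuousOn_fst.prodMk hcc) ?_
    intro p hp
    exact ⟨hp.1, hc1 p.1 hp.1 p.2⟩
  obtain ⟨Mu, hMu⟩ := isCompact_Icc.exists_bound_of_continuousOn hu
  obtain ⟨Mv, hMv⟩ := isCompact_Icc.exists_bound_of_continuousOn hv
  obtain ⟨B, hB⟩ := (isCompact_Icc.prod (isCompact_Icc (a := -Mv) (b := Mu))).exists_bound_of_continuousOn
    (hgc.mono (Set.prod_mono (Set.Subset.refl _) (Set.subset_univ _)))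
  have pc : Continuous fun x : ℝ => max 0 (min 1 x) := by fun_prop
  refine ⟨fun y x => g (max 0 (min 1 x), y (max 0 (min 1 x))), B, ?_, ?_, ?_, ?_, ?_⟩
  · intro y hy
    refine hgc.comp_continuous (f := fun x => (max 0 (min 1 x), y (max 0 (min 1 x)))) ?_ ?_
    · exact pc.prodMk (hy.comp_continuous pc proj_mem)
    · exact fun x => ⟨proj_mem x, trivial⟩
  · intro y x
    beta_reduce
    set t := max 0 (min 1 x)
    have ht : t ∈ Set.Icc (0 : ℝ) 1 := proj_mem x
    have e1 := hc1 t ht (y t)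
    have e2 : g (t, y t) = g (t, c t (y t)) := by
      simp only [hg]; rw [hc2 t (c t (y t)) e1.1 e1.2]
    rw [e2]
    have a1 := abs_le.1 (hMu t ht)
    have a2 := abs_le.1 (hMv t ht)
    exact hB (t, c t (y t)) ⟨ht, by linarith [a2.1], by linarith [a1.2]⟩
  · intro yn y hy x hx
    simp only [proj_eq x hx]
    have h1 : ContinuousWithinAt g (Set.Icc (0 : ℝ) 1 ×ˢ Set.univ) (x, y x) :=
      hgc (x, y x) ⟨hx, trivial⟩
    refine h1.tendsto.comp ?_
    refine tendsto_nhdsWithin_iff.2 ⟨tendsto_const_nhds.prodMk_nhds (hy x hx), ?_⟩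
    exact Filter.Eventually.of_forall fun n => ⟨hx, trivial⟩
  · intro a b hab x
    simp only
    set t := max 0 (min 1 x)
    have ht : t ∈ Set.Icc (0 : ℝ) 1 := proj_mem x
    have hle : c t (a t) ≤ c t (b t) := max_le_max le_rfl (min_le_min le_rfl (hab t ht))
    have e1 := hc1 t ht (a t)
    have e2 := hc1 t ht (b t)
    have := hlip t ht _ _ e1.1 e1.2 e2.1 e2.2 hle
    simp only [hg]
    nlinarith [mul_nonneg (sub_nonneg.2 hMκ) (sub_nonneg.2 hle)]
  · intro y x hx h1 h2
    simp only [proj_eq x hx, hg]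
    rw [hc2 x (y x) h1 h2]

/-- **Theorem 5.3 (existence, well-ordered case, negative `λ`).**
For `α ≥ 1`, `ν = (1−α)/2`, `0 < η < 1`, `λ < 0`, with `δ` satisfying `(H₀')`,
an upper solution `u₀` and lower solution `v₀` with `v₀ ≤ u₀`, `f` continuous
on `D₂ = {(x,y) : x ∈ [0,1], v₀(x) ≤ y ≤ u₀(x)}` and one-sided Lipschitz from
below with constant `−M₃`, `M₃ ≥ 0`, `M₃ + λ ≤ 0`: there are solutions `v, u`
with `v₀ ≤ v ≤ u ≤ u₀`, and every solution `z` in `D₂` satisfies `v ≤ z ≤ u`. -/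
theorem existence_well_ordered_neg_lambda (α lam δ η ν : ℝ) (hα : 1 ≤ α)
    (hν : ν = (1 - α) / 2)
    (hη0 : 0 < η) (hη1 : η < 1)
    (hlam : lam < 0) (hδ : 0 < δ)
    (hH1 : besselK ν (Real.sqrt |lam|)
        - δ * η ^ ν * besselK ν (η * Real.sqrt |lam|) ≤ 0)
    (hH2 : 0 < besselI (-ν) (Real.sqrt |lam|)
        - δ * η ^ ν * besselI (-ν) (η * Real.sqrt |lam|))
    (f : ℝ → ℝ → ℝ) (u₀ v₀ : ℝ → ℝ)
    (hu₀ : IsUpperSolution α δ η f u₀) (hv₀ : IsLowerSolution α δ η f v₀)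
    (horder : ∀ x ∈ Set.Icc (0 : ℝ) 1, v₀ x ≤ u₀ x)
    (hfcont : ContinuousOn (fun p : ℝ × ℝ => f p.1 p.2)
      {p : ℝ × ℝ | p.1 ∈ Set.Icc (0 : ℝ) 1 ∧ v₀ p.1 ≤ p.2 ∧ p.2 ≤ u₀ p.1})
    (M₃ : ℝ) (hM₃ : 0 ≤ M₃)
    (hlip : ∀ x ∈ Set.Icc (0 : ℝ) 1, ∀ y w : ℝ,
      v₀ x ≤ y → y ≤ u₀ x → v₀ x ≤ w → w ≤ u₀ x → y ≤ w →
        -(M₃ * (w - y)) ≤ f x w - f x y)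
    (hMlam : M₃ + lam ≤ 0) :
    ∃ v u : ℝ → ℝ, IsBVPSolution α δ η f v ∧ IsBVPSolution α δ η f u ∧
      (∀ x ∈ Set.Icc (0 : ℝ) 1, v₀ x ≤ v x ∧ v x ≤ u x ∧ u x ≤ u₀ x) ∧
      ∀ z : ℝ → ℝ, IsBVPSolution α δ η f z →
        (∀ x ∈ Set.Icc (0 : ℝ) 1, v₀ x ≤ z x ∧ z x ≤ u₀ x) →
        ∀ x ∈ Set.Icc (0 : ℝ) 1, v x ≤ z x ∧ z x ≤ u x := by
  obtain ⟨φ, φ1, φ2, h1, h2, h3, hpos, hδφ⟩ := exists_phi α lam δ η ν hα hν hη0 hlam hH2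
  obtain ⟨ua, ub, uc, ud, ue, uf⟩ := hu₀
  obtain ⟨va, vb, vc, vd, ve, vf⟩ := hv₀
  have hφ : Continuous φ := continuous_iff_continuousAt.2 fun x => (h1 x).continuousAt
  have huc : ContinuousOn u₀ (Set.Icc 0 1) := fun x hx => (ua x hx).continuousAt.continuousWithinAt
  have hvc : ContinuousOn v₀ (Set.Icc 0 1) := fun x hx => (va x hx).continuousAt.continuousWithinAt
  have huc1 : ContinuousOn (deriv u₀) (Set.Icc 0 1) :=
    fun x hx => (ub x hx).continuousAt.continuousWithinAt
  have hvc1 : ContinuousOn (deriv v₀) (Set.Icc 0 1) :=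
    fun x hx => (vb x hx).continuousAt.continuousWithinAt
  obtain ⟨H, B, Hc, Hb, Hl, Hm, He⟩ := exists_H (-lam) f u₀ v₀ huc hvc horder hfcont M₃ hlip
    (by linarith)
  set S : (ℝ → ℝ) → ℝ → ℝ := fun y => TF α δ η φ (H y) with hS
  have cmp := cmp_principle α (-lam) δ η hα hη0 hη1 hδ φ φ1 φ2 h1 h2 h3 hpos hδφ
  have spec := fun (y : ℝ → ℝ) (hy : ContinuousOn y (Set.Icc 0 1)) =>
    TF_spec α (-lam) δ η hα φ φ1 φ2 h1 h2 h3 hpos hδφ (H y) (Hc y hy)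
  simp only [show ∀ y, TF α δ η φ (H y) = S y from fun _ => rfl] at spec
  have Sc : ∀ y, ContinuousOn y (Set.Icc 0 1) → ContinuousOn (S y) (Set.Icc 0 1) :=
    fun y hy x _ => ((spec y hy).1 x).continuousAt.continuousWithinAt
  have Sm : ∀ a b : ℝ → ℝ, ContinuousOn a (Set.Icc 0 1) → ContinuousOn b (Set.Icc 0 1) →
      (∀ x ∈ Set.Icc (0 : ℝ) 1, a x ≤ b x) → ∀ x ∈ Set.Icc (0 : ℝ) 1, S a x ≤ S b x := by
    intro a b ha hb hab
    obtain ⟨a1, a2, a3, a4, a5, a6⟩ := spec a ha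
    obtain ⟨b1, b2, b3, b4, b5, b6⟩ := spec b hb
    refine cmp _ _ (fun x _ => a1 x) a2.continuousOn a3 (fun x _ => b1 x) b2.continuousOn b3 ?_ ?_
    · intro x hx
      rw [a4 x hx, b4 x hx]
      exact mul_le_mul_of_nonneg_left (Hm a b hab x) (Real.rpow_nonneg hx.1.le _)
    · rw [a6, b6]; simp
  -- super/sub solutions
  have Sup : ∀ z : ℝ → ℝ, (∀ x ∈ Set.Icc (0 : ℝ) 1, DifferentiableAt ℝ z x) →
      ContinuousOn (deriv z) (Set.Icc 0 1) →
      (∀ x ∈ Set.Ioo (0 : ℝ) 1, DifferentiableAt ℝ (deriv z) x) →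
      (∀ x ∈ Set.Icc (0 : ℝ) 1, v₀ x ≤ z x ∧ z x ≤ u₀ x) →
      (∀ x ∈ Set.Ioo (0 : ℝ) 1,
        x ^ α * f x (z x) ≤ -(α * x ^ (α - 1) * deriv z x + x ^ α * deriv (deriv z) x)) →
      δ * z η ≤ z 1 → ∀ x ∈ Set.Icc (0 : ℝ) 1, S z x ≤ z x := by
    intro z z1 z2 z3 z4 z5 z6
    have hz : ContinuousOn z (Set.Icc 0 1) :=
      fun x hx => (z1 x hx).continuousAt.continuousWithinAt
    obtain ⟨a1, a2, a3, a4, a5, a6⟩ := spec z hz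
    refine cmp _ _ (fun x _ => a1 x) a2.continuousOn a3 z1 z2 z3 ?_ ?_
    · intro x hx
      have hx' := Set.Ioo_subset_Icc_self hx
      rw [a4 x hx, He z x hx' (z4 x hx').1 (z4 x hx').2]
      have := z5 x hx
      linarith
    · rw [a6]; linarith
  have Sub : ∀ z : ℝ → ℝ, (∀ x ∈ Set.Icc (0 : ℝ) 1, DifferentiableAt ℝ z x) →
      ContinuousOn (deriv z) (Set.Icc 0 1) →
      (∀ x ∈ Set.Ioo (0 : ℝ) 1, DifferentiableAt ℝ (deriv z) x) →
      (∀ x ∈ Set.Icc (0 : ℝ) 1, v₀ x ≤ z x ∧ z x ≤ u₀ x) →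
      (∀ x ∈ Set.Ioo (0 : ℝ) 1,
        -(α * x ^ (α - 1) * deriv z x + x ^ α * deriv (deriv z) x) ≤ x ^ α * f x (z x)) →
      z 1 ≤ δ * z η → ∀ x ∈ Set.Icc (0 : ℝ) 1, z x ≤ S z x := by
    intro z z1 z2 z3 z4 z5 z6
    have hz : ContinuousOn z (Set.Icc 0 1) :=
      fun x hx => (z1 x hx).continuousAt.continuousWithinAt
    obtain ⟨a1, a2, a3, a4, a5, a6⟩ := spec z hz
    refine cmp _ _ z1 z2 z3 (fun x _ => a1 x) a2.continuousOn a3 ?_ ?_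
    · intro x hx
      have hx' := Set.Ioo_subset_Icc_self hx
      rw [a4 x hx, He z x hx' (z4 x hx').1 (z4 x hx').2]
      have := z5 x hx
      linarith
    · rw [a6]; linarith
  have Su : ∀ x ∈ Set.Icc (0 : ℝ) 1, S u₀ x ≤ u₀ x :=
    Sup u₀ ua huc1 (fun x hx => ub x (Set.Ioo_subset_Icc_self hx))
      (fun x hx => ⟨horder x hx, le_rfl⟩) ud uf
  have Sv : ∀ x ∈ Set.Icc (0 : ℝ) 1, v₀ x ≤ S v₀ x :=
    Sub v₀ va hvc1 (fun x hx => vb x (Set.Ioo_subset_Icc_self hx))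
      (fun x hx => ⟨le_rfl, horder x hx⟩) vd vf
  set vn : ℕ → ℝ → ℝ := fun n => S^[n] v₀ with hvn
  set un : ℕ → ℝ → ℝ := fun n => S^[n] u₀ with hun
  have vS : ∀ n, vn (n + 1) = S (vn n) := fun n => Function.iterate_succ_apply' S n v₀
  have uS : ∀ n, un (n + 1) = S (un n) := fun n => Function.iterate_succ_apply' S n u₀
  have vcn : ∀ n, ContinuousOn (vn n) (Set.Icc 0 1) := by
    intro n
    induction n with
    | zero => exact hvc
    | succ n ih => rw [vS]; exact Sc _ ih
  have ucn : ∀ n, ContinuousOn (un n) (Set.Icc 0 1) := by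
    intro n
    induction n with
    | zero => exact huc
    | succ n ih => rw [uS]; exact Sc _ ih
  have vmono : ∀ n, ∀ x ∈ Set.Icc (0 : ℝ) 1, vn n x ≤ vn (n + 1) x := by
    intro n
    induction n with
    | zero => exact Sv
    | succ n ih =>
      rw [vS (n + 1)]; nth_rewrite 1 [vS n]
      exact Sm _ _ (vcn _) (vcn _) ih
  have umono : ∀ n, ∀ x ∈ Set.Icc (0 : ℝ) 1, un (n + 1) x ≤ un n x := by
    intro n
    induction n with
    | zero => exact Su
    | succ n ih =>
      rw [uS (n + 1)]; nth_rewrite 2 [uS n]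
      exact Sm _ _ (ucn _) (ucn _) ih
  have vun : ∀ n, ∀ x ∈ Set.Icc (0 : ℝ) 1, vn n x ≤ un n x := by
    intro n
    induction n with
    | zero => exact horder
    | succ n ih => rw [vS, uS]; exact Sm _ _ (vcn _) (ucn _) ih
  have vM : ∀ x ∈ Set.Icc (0 : ℝ) 1, Monotone fun n => vn n x :=
    fun x hx => monotone_nat_of_le_succ fun n => vmono n x hx
  have uM : ∀ x ∈ Set.Icc (0 : ℝ) 1, Antitone fun n => un n x :=
    fun x hx => antitone_nat_of_succ_le fun n => umono n x hx
  have vlo : ∀ n, ∀ x ∈ Set.Icc (0 : ℝ) 1, v₀ x ≤ vn n x := fun n x hx => vM x hx (Nat.zero_le n)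
  have uhi : ∀ n, ∀ x ∈ Set.Icc (0 : ℝ) 1, un n x ≤ u₀ x := fun n x hx => uM x hx (Nat.zero_le n)
  have vL : ∀ x ∈ Set.Icc (0 : ℝ) 1,
      Filter.Tendsto (fun n => vn n x) Filter.atTop (nhds (⨆ n, vn n x)) := fun x hx =>
    tendsto_atTop_ciSup (vM x hx)
      ⟨u₀ x, by rintro _ ⟨n, rfl⟩; exact (vun n x hx).trans (uhi n x hx)⟩
  have uL : ∀ x ∈ Set.Icc (0 : ℝ) 1,
      Filter.Tendsto (fun n => un n x) Filter.atTop (nhds (⨅ n, un n x)) := fun x hx =>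
    tendsto_atTop_ciInf (uM x hx)
      ⟨v₀ x, by rintro _ ⟨n, rfl⟩; exact (vlo n x hx).trans (vun n x hx)⟩
  obtain ⟨vsc, vfix⟩ := lim_fix α δ η hα hη0 hη1 φ hφ hpos B H Hc Hb Hl vn vcn vS
    (fun x => ⨆ n, vn n x) vL
  obtain ⟨usc, ufix⟩ := lim_fix α δ η hα hη0 hη1 φ hφ hpos B H Hc Hb Hl un ucn uS
    (fun x => ⨅ n, un n x) uL
  set vs : ℝ → ℝ := fun x => ⨆ n, vn n x with hvs
  set us : ℝ → ℝ := fun x => ⨅ n, un n x with hus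
  have o1 : ∀ x ∈ Set.Icc (0 : ℝ) 1, v₀ x ≤ vs x := fun x hx =>
    ge_of_tendsto' (vL x hx) fun n => vlo n x hx
  have o2 : ∀ x ∈ Set.Icc (0 : ℝ) 1, vs x ≤ us x := fun x hx =>
    le_of_tendsto_of_tendsto' (vL x hx) (uL x hx) fun n => vun n x hx
  have o3 : ∀ x ∈ Set.Icc (0 : ℝ) 1, us x ≤ u₀ x := fun x hx =>
    le_of_tendsto' (uL x hx) fun n => uhi n x hx
  have sol : ∀ y : ℝ → ℝ, ContinuousOn y (Set.Icc 0 1) →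
      (∀ x ∈ Set.Icc (0 : ℝ) 1, S y x = y x) →
      (∀ x ∈ Set.Icc (0 : ℝ) 1, v₀ x ≤ y x ∧ y x ≤ u₀ x) → IsBVPSolution α δ η f (S y) := by
    intro y hy hfix hb
    obtain ⟨a1, a2, a3, a4, a5, a6⟩ := spec y hy
    refine ⟨Sc y hy, fun x _ => a1 x, a2.continuousOn, a3, ?_, a5, a6⟩
    intro x hx
    have hx' := Set.Ioo_subset_Icc_self hx
    have e := a4 x hx
    rw [He y x hx' (hb x hx').1 (hb x hx').2] at e
    rw [hfix x hx'] at e ⊢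
    linarith
  refine ⟨S vs, S us, sol vs vsc vfix fun x hx => ⟨o1 x hx, (o2 x hx).trans (o3 x hx)⟩,
    sol us usc ufix fun x hx => ⟨(o1 x hx).trans (o2 x hx), o3 x hx⟩, ?_, ?_⟩
  · intro x hx
    have e1 : S vs x = vs x := vfix x hx
    have e2 : S us x = us x := ufix x hx
    rw [e1, e2]
    exact ⟨o1 x hx, o2 x hx, o3 x hx⟩
  · intro z hz hzb
    obtain ⟨z0, z1, z2, z3, z4, z5, z6⟩ := hz
    have zS1 := Sup z z1 z2 z3 hzb (fun x hx => (z4 x hx).ge) z6.ge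
    have zS2 := Sub z z1 z2 z3 hzb (fun x hx => (z4 x hx).le) z6.le
    have k1 : ∀ n, ∀ x ∈ Set.Icc (0 : ℝ) 1, vn n x ≤ z x := by
      intro n
      induction n with
      | zero => exact fun x hx => (hzb x hx).1
      | succ n ih =>
        intro x hx
        rw [vS]
        exact (Sm _ _ (vcn n) z0 ih x hx).trans (zS1 x hx)
    have k2 : ∀ n, ∀ x ∈ Set.Icc (0 : ℝ) 1, z x ≤ un n x := by
      intro n
      induction n with
      | zero => exact fun x hx => (hzb x hx).2
      | succ n ih =>
        intro x hx
        rw [uS]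
        exact (zS2 x hx).trans (Sm _ _ z0 (ucn n) ih x hx)
    intro x hx
    have e1 : S vs x = vs x := vfix x hx
    have e2 : S us x = us x := ufix x hx
    rw [e1, e2]
    exact ⟨le_of_tendsto' (vL x hx) fun n => k1 n x hx,
      ge_of_tendsto' (uL x hx) fun n => k2 n x hx⟩
end

section
/- (Uniqueness.) Let n ≥ 1 be a natural number, let α ∈ (4n−3, 4n−1), set ν = (1−α)/2, let 0 < η < 1, let f : [0,1] × ℝ → ℝ be continuous, and suppose there exists M_λ > 0 such that (H_0) holds with λ = M_λ (that is, 0 < M_λ < j_{ν,1}², 0 < δ < 1, δ·η^ν·J_ν(η·√M_λ) − J_ν(√M_λ) ≥ 0, and J_{−ν}(√M_λ) − δ·η^ν·J_{−ν}(η·√M_λ) > 0) and such that f(x,u) − f(x,v) ≤ M_λ·(u − v) for all x ∈ [0,1] and all real numbers u, v with v ≤ u. Then the boundary value problem −(x^α·y'(x))' = x^α·f(x,y(x)) for 0 < x < 1, y'(0) = 0, y(1) = δ·y(η) has at most one solution: any two solutions coincide on [0,1]. -/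
noncomputable def bc (μ : ℝ) (m : ℕ) : ℝ :=
  (-1 : ℝ) ^ m / ((m.factorial : ℝ) * Real.Gamma ((m : ℝ) + μ + 1))

noncomputable def bE (μ z : ℝ) : ℝ := ∑' m : ℕ, bc μ m * z ^ m

lemma nonint_shift {μ : ℝ} (hμ : ∀ k : ℤ, μ ≠ k) (j : ℤ) : ∀ k : ℤ, μ + j ≠ k := by
  intro k h
  apply hμ (k - j)
  push_cast
  linarith

lemma gam_rec {μ : ℝ} (hμ : ∀ k : ℤ, μ ≠ k) (m : ℕ) :
    Real.Gamma ((m : ℝ) + μ + 1) ≠ 0 := by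
  apply Real.Gamma_ne_zero
  intro k h
  apply hμ (-(k : ℤ) - m - 1)
  push_cast
  linarith

lemma bc_succ {μ : ℝ} (hμ : ∀ k : ℤ, μ ≠ k) (m : ℕ) :
    bc μ (m + 1) * (((m : ℝ) + 1) * ((m : ℝ) + μ + 1)) = - bc μ m := by
  have h0 : (m : ℝ) + μ + 1 ≠ 0 := by
    intro h
    apply hμ (-(m : ℤ) - 1)
    push_cast
    linarith
  have h1 := gam_rec hμ m
  have h2 : Real.Gamma (((m + 1 : ℕ) : ℝ) + μ + 1)
      = ((m : ℝ) + μ + 1) * Real.Gamma ((m : ℝ) + μ + 1) := by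
    rw [← Real.Gamma_add_one h0]
    congr 1
    push_cast
    ring
  have h3 : (m.factorial : ℝ) ≠ 0 := by positivity
  have h4 : (m : ℝ) + 1 ≠ 0 := by positivity
  unfold bc
  rw [h2, Nat.factorial_succ]
  push_cast
  field_simp
  ring

lemma bc_shift (μ : ℝ) (m : ℕ) :
    bc μ (m + 1) * ((m : ℝ) + 1) = - bc (μ + 1) m := by
  have h4 : (m : ℝ) + 1 ≠ 0 := by positivity
  unfold bc
  rw [Nat.factorial_succ]
  have : ((m + 1 : ℕ) : ℝ) + μ + 1 = (m : ℝ) + (μ + 1) + 1 := by push_cast; ring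
  rw [this]
  push_cast
  rw [pow_succ, mul_assoc ((m : ℝ) + 1)]
  rw [div_mul_eq_mul_div, mul_comm _ ((m : ℝ) + 1), mul_div_mul_left _ _ h4]
  ring

lemma bc_down {μ : ℝ} (hμ : ∀ k : ℤ, μ ≠ k) (m : ℕ) :
    bc μ m = ((m : ℝ) + (μ + 1)) * bc (μ + 1) m := by
  have h := bc_succ hμ m
  have h' := bc_shift μ m
  linarith [show bc μ (m + 1) * (((m : ℝ) + 1) * ((m : ℝ) + μ + 1)) = -(((m : ℝ) + (μ + 1)) * bc (μ + 1) m) by linear_combination ((m : ℝ) + (μ + 1)) * h']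

lemma bc_summable {μ : ℝ} (hμ : ∀ k : ℤ, μ ≠ k) (z : ℝ) :
    Summable (fun m => bc μ m * z ^ m) := by
  apply summable_of_ratio_norm_eventually_le (r := 1 / 2) (by norm_num)
  filter_upwards [Filter.eventually_ge_atTop (⌈|μ| + 2 * |z|⌉₊)] with m hm
  have hm' : |μ| + 2 * |z| ≤ m := (Nat.le_ceil _).trans (by exact_mod_cast hm)
  have hz := abs_nonneg z
  have hmu := neg_abs_le μ
  have hmu0 := abs_nonneg μ
  have h := bc_succ hμ m
  have e : ‖bc μ (m + 1)‖ * (((m : ℝ) + 1) * ((m : ℝ) + μ + 1)) = ‖bc μ m‖ := by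
    rw [← norm_neg (bc μ m), ← h, norm_mul]
    congr 1
    rw [Real.norm_of_nonneg]
    apply mul_nonneg <;> linarith
  rw [norm_mul, norm_mul, ← e, pow_succ, norm_mul]
  have h5 : ‖z‖ ≤ 1 / 2 * (((m : ℝ) + 1) * ((m : ℝ) + μ + 1)) := by
    rw [Real.norm_eq_abs]
    nlinarith
  calc ‖bc μ (m + 1)‖ * (‖z ^ m‖ * ‖z‖)
      ≤ ‖bc μ (m + 1)‖ * (‖z ^ m‖ * (1 / 2 * (((m : ℝ) + 1) * ((m : ℝ) + μ + 1)))) := by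
        gcongr
    _ = _ := by ring

lemma bE_hasDerivAt {μ : ℝ} (hμ : ∀ k : ℤ, μ ≠ k) (z : ℝ) :
    HasDerivAt (bE μ) (- bE (μ + 1) z) z := by
  have hμ1 : ∀ k : ℤ, μ + 1 ≠ k := by simpa using nonint_shift hμ 1
  set R : ℝ := |z| + 1 with hR
  have hR0 : 0 < R := by positivity
  have hu : Summable (fun m : ℕ => ‖bc μ m * ((m : ℝ) * R ^ (m - 1))‖) := by
    rw [← summable_nat_add_iff 1]
    have := (bc_summable hμ1 R).norm
    refine this.congr ?_
    intro m
    have := bc_shift μ m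
    rw [← norm_neg]
    congr 1
    simp only [Nat.add_sub_cancel]
    push_cast
    linear_combination (-R ^ m) * this
  have key := hasDerivAt_tsum_of_isPreconnected (𝕜 := ℝ)
    (g := fun (m : ℕ) (x : ℝ) => bc μ m * x ^ m)
    (g' := fun (m : ℕ) (x : ℝ) => bc μ m * ((m : ℝ) * x ^ (m - 1)))
    (t := Metric.ball 0 R) (y₀ := z) (y := z) hu Metric.isOpen_ball
    (convex_ball _ _).isPreconnected
    (fun m x _ => (hasDerivAt_pow m x).const_mul _)
    (by
      intro m x hx
      have hx' : |x| ≤ R := by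
        have : |x| < R := by simpa using hx
        exact this.le
      rw [norm_mul, norm_mul, norm_mul, norm_mul, norm_pow, norm_pow]
      have : ‖x‖ ≤ ‖R‖ := by
        rw [Real.norm_eq_abs, Real.norm_eq_abs, abs_of_pos hR0]; exact hx'
      gcongr)
    (by simp [hR]) (bc_summable hμ z) (by simp [hR])
  have hs : Summable (fun m : ℕ => bc μ m * ((m : ℝ) * z ^ (m - 1))) := by
    rw [← summable_nat_add_iff 1]
    refine (bc_summable hμ1 z).neg.congr ?_
    intro m
    have := bc_shift μ m
    simp only [Nat.add_sub_cancel]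
    push_cast
    linear_combination (-z ^ m) * this
  have e : ∑' m : ℕ, bc μ m * ((m : ℝ) * z ^ (m - 1)) = - bE (μ + 1) z := by
    rw [hs.tsum_eq_zero_add]
    simp only [Nat.cast_zero, zero_mul, mul_zero, zero_add]
    unfold bE
    rw [← tsum_neg]
    apply tsum_congr
    intro m
    have := bc_shift μ m
    simp only [Nat.add_sub_cancel]
    push_cast
    linear_combination (z ^ m) * this
  rw [e] at key
  exact key

lemma bE_rec {μ : ℝ} (hμ : ∀ k : ℤ, μ ≠ k) (z : ℝ) :
    bE μ z = (μ + 1) * bE (μ + 1) z - z * bE (μ + 2) z := by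
  have hμ1 : ∀ k : ℤ, μ + 1 ≠ k := by simpa using nonint_shift hμ 1
  have hμ2 : ∀ k : ℤ, μ + 2 ≠ k := by simpa using nonint_shift hμ 2
  have s0 := bc_summable hμ z
  have s1 := bc_summable hμ1 z
  have s2 := bc_summable hμ2 z
  unfold bE
  rw [s0.tsum_eq_zero_add, s1.tsum_eq_zero_add, mul_add, ← tsum_mul_left, ← tsum_mul_left,
    add_sub_assoc, ← Summable.tsum_sub]
  · congr 1
    · rw [bc_down hμ 0]; simp
    · apply tsum_congr
      intro m
      have h1 := bc_down hμ (m + 1)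
      have h2 := bc_shift (μ + 1) m
      rw [show μ + 1 + 1 = μ + 2 by ring] at h2
      push_cast at h1
      linear_combination z ^ (m + 1) * h1 + z ^ (m + 1) * h2
  · exact ((summable_nat_add_iff 1).2 s1).mul_left _
  · exact s2.mul_left _

lemma bE_zero (μ : ℝ) : bE μ 0 = 1 / Real.Gamma (μ + 1) := by
  unfold bE
  rw [tsum_eq_single 0]
  · simp [bc]
  · intro m hm
    simp [hm]

lemma besselJ_eq (μ : ℝ) {t : ℝ} (ht : 0 < t) :
    besselJ μ t = (t / 2) ^ μ * bE μ (t ^ 2 / 4) := by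
  unfold besselJ bE
  rw [← tsum_mul_left]
  apply tsum_congr
  intro m
  have h2 : 0 < t / 2 := by positivity
  rw [Real.rpow_add h2]
  have : (t / 2) ^ (2 * (m : ℝ)) = (t ^ 2 / 4) ^ m := by
    rw [Real.rpow_mul h2.le, Real.rpow_natCast]
    congr 1
    rw [Real.rpow_two]; ring
  rw [this]
  unfold bc
  ring

/-- Wronskian-type quantity is constant. -/
lemma wronsk {ν : ℝ} (hν : ∀ k : ℤ, ν ≠ k) (z : ℝ) :
    bE (-ν - 1) z * bE ν z + z * (bE (-ν) z * bE (ν + 1) z)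
      = 1 / Real.Gamma (-ν) * (1 / Real.Gamma (ν + 1)) := by
  have hn : ∀ k : ℤ, -ν ≠ k := by
    intro k h
    apply hν (-k)
    push_cast; linarith
  have hn1 : ∀ k : ℤ, -ν - 1 ≠ k := by simpa [sub_eq_add_neg] using nonint_shift hn (-1)
  have hp1 : ∀ k : ℤ, ν + 1 ≠ k := by simpa using nonint_shift hν 1
  have hd : ∀ x, HasDerivAt (fun z => bE (-ν - 1) z * bE ν z + z * (bE (-ν) z * bE (ν + 1) z))
      0 x := by
    intro x
    have a := bE_hasDerivAt hn1 x
    have b := bE_hasDerivAt hν x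
    have c := bE_hasDerivAt hn x
    have d := bE_hasDerivAt hp1 x
    have r1 := bE_rec hn1 x
    have r2 := bE_rec hν x
    rw [show -ν - 1 + 1 = -ν by ring] at a r1
    rw [show -ν - 1 + 2 = -ν + 1 by ring] at r1
    rw [show ν + 1 + 1 = ν + 2 by ring] at d
    have := (a.mul b).add ((hasDerivAt_id x).mul (c.mul d))
    refine this.congr_deriv ?_
    simp only [id, Pi.mul_apply]
    linear_combination (-bE (ν + 1) x) * r1 - bE (-ν) x * r2
  have hc := is_const_of_deriv_eq_zero (fun x => (hd x).differentiableAt)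
    (fun x => (hd x).deriv) z 0
  beta_reduce at hc
  rw [hc, bE_zero, bE_zero]
  simp

lemma bE_pos {ν : ℝ} (hν : ∀ k : ℤ, ν ≠ k) (hneg : ν < 0) {K : ℝ}
    (hB : ∀ z, 0 < z → z ≤ K → bE ν z ≠ 0) :
    ∀ z, 0 ≤ z → z ≤ K → 0 < bE (-ν) z := by
  have hn : ∀ k : ℤ, -ν ≠ k := by
    intro k h
    apply hν (-k)
    push_cast; linarith
  have hn1 : ∀ k : ℤ, -ν - 1 ≠ k := by simpa [sub_eq_add_neg] using nonint_shift hn (-1)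
  have g1 : Real.Gamma (ν + 1) ≠ 0 := by simpa using gam_rec hν 0
  have g2 : Real.Gamma (-ν) ≠ 0 := (Real.Gamma_pos_of_pos (by linarith)).ne'
  have hA0 : 0 < bE (-ν) 0 := by
    rw [bE_zero]
    have := Real.Gamma_pos_of_pos (s := -ν + 1) (by linarith)
    positivity
  have hB' : ∀ z, 0 ≤ z → z ≤ K → bE ν z ≠ 0 := by
    intro z h0 hK
    rcases h0.eq_or_lt with h | h
    · rw [← h, bE_zero]; exact one_div_ne_zero g1
    · exact hB z h hK
  have cA : Continuous (bE (-ν)) :=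
    continuous_iff_continuousAt.2 fun x => (bE_hasDerivAt hn x).continuousAt
  have cB : Continuous (bE ν) :=
    continuous_iff_continuousAt.2 fun x => (bE_hasDerivAt hν x).continuousAt
  have nz : ∀ z, 0 < z → z ≤ K → bE (-ν) z ≠ 0 := by
    intro z hz hK h0
    have cont : ContinuousOn (fun x => x ^ (-ν) * bE (-ν) x / bE ν x) (Set.Icc 0 z) := by
      apply ContinuousOn.div
      · exact ((Real.continuous_rpow_const (by linarith)).mul cA).continuousOn
      · exact cB.continuousOn
      · intro x hx
        exact hB' x hx.1 (hx.2.trans hK)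
    have hder : ∀ x ∈ Set.Ioo 0 z, HasDerivAt (fun x => x ^ (-ν) * bE (-ν) x / bE ν x)
        (x ^ (-ν - 1) * (1 / Real.Gamma (-ν) * (1 / Real.Gamma (ν + 1))) / (bE ν x) ^ 2) x := by
      intro x hx
      have hb := hB' x hx.1.le (hx.2.le.trans hK)
      have d1 := Real.hasDerivAt_rpow_const (x := x) (p := -ν) (Or.inl hx.1.ne')
      have d := (d1.mul (bE_hasDerivAt hn x)).div (bE_hasDerivAt hν x) hb
      refine d.congr_deriv ?_
      rw [← wronsk hν x]
      have r1 := bE_rec hn1 x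
      rw [show -ν - 1 + 1 = -ν by ring, show -ν - 1 + 2 = -ν + 1 by ring] at r1
      have hx1 : x ^ (-ν) = x ^ (-ν - 1) * x := by
        rw [← Real.rpow_add_one hx.1.ne']; ring_nf
      simp only [Pi.mul_apply]
      rw [hx1, r1]
      congr 1
      ring
    obtain ⟨c, hc, hc'⟩ := exists_hasDerivAt_eq_zero hz cont (by
      simp only [h0]
      rw [Real.zero_rpow (by linarith)]
      simp) hder
    have : 0 < c ^ (-ν - 1) := Real.rpow_pos_of_pos hc.1 _
    have hb := hB' c hc.1.le (hc.2.le.trans hK)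
    have : c ^ (-ν - 1) * (1 / Real.Gamma (-ν) * (1 / Real.Gamma (ν + 1))) / (bE ν c) ^ 2 ≠ 0 := by
      positivity
    exact this hc'
  intro z h0 hK
  by_contra hle
  push Not at hle
  obtain ⟨c, hc, hc'⟩ := intermediate_value_Icc' h0 cA.continuousOn (show (0 : ℝ) ∈ Set.Icc _ _ from ⟨hle, hA0.le⟩)
  rcases hc.1.eq_or_lt with h | h
  · rw [← h] at hc'; exact hA0.ne' hc'
  · exact nz c h (hc.2.trans hK) hc'

lemma comparison {α M δ η : ℝ} (hα : 0 < α) (hη0 : 0 < η) (hη1 : η < 1) (hδ0 : 0 < δ)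
    {p dp ddp w dw ddw : ℝ → ℝ} (g : ℝ → ℝ)
    (hp : ∀ x, HasDerivAt p (dp x) x) (hdp : ∀ x, HasDerivAt dp (ddp x) x)
    (hode : ∀ x, x * ddp x + α * dp x + M * x * p x = 0)
    (hpos : ∀ x, 0 ≤ x → x ≤ 1 → 0 < p x)
    (hbd : δ * p η < p 1)
    (hw : ∀ x ∈ Set.Icc (0 : ℝ) 1, HasDerivAt w (dw x) x)
    (hdwc : ContinuousOn dw (Set.Icc 0 1))
    (hdw : ∀ x ∈ Set.Ioo (0 : ℝ) 1, HasDerivAt dw (ddw x) x)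
    (hweq : ∀ x ∈ Set.Ioo (0 : ℝ) 1,
      α * x ^ (α - 1) * dw x + x ^ α * ddw x = - (x ^ α * g x))
    (hg : ∀ x ∈ Set.Ioo (0 : ℝ) 1, 0 ≤ (M * w x - g x) * w x)
    (hw1 : w 1 = δ * w η) : ∀ x ∈ Set.Icc (0 : ℝ) 1, w x = 0 := by
  have cp : Continuous p := continuous_iff_continuousAt.2 fun x => (hp x).continuousAt
  have cdp : Continuous dp := continuous_iff_continuousAt.2 fun x => (hdp x).continuousAt
  have cw : ContinuousOn w (Set.Icc 0 1) := fun x hx => (hw x hx).continuousAt.continuousWithinAt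
  have hpn : ∀ x ∈ Set.Icc (0 : ℝ) 1, p x ≠ 0 := fun x hx => (hpos x hx.1 hx.2).ne'
  set Q : ℝ → ℝ := fun x => x ^ α * (dw x * p x - w x * dp x) * (w x / p x) with hQ
  have cQ : ContinuousOn Q (Set.Icc 0 1) := by
    apply ContinuousOn.mul
    · apply ContinuousOn.mul
      · exact (Real.continuous_rpow_const hα.le).continuousOn
      · exact (hdwc.mul cp.continuousOn).sub (cw.mul cdp.continuousOn)
    · exact cw.div cp.continuousOn hpn
  have mQ : MonotoneOn Q (Set.Icc 0 1) := by
    have hder : ∀ x ∈ Set.Ioo (0 : ℝ) 1, HasDerivAt Q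
        (x ^ α * ((M * w x - g x) * w x) + x ^ α * (dw x * p x - w x * dp x) ^ 2 / p x ^ 2) x := by
      intro x hx
      have hxI := Set.Ioo_subset_Icc_self hx
      have d0 := Real.hasDerivAt_rpow_const (x := x) (p := α) (Or.inl hx.1.ne')
      have dW := (((hdw x hx).mul (hp x)).sub ((hw x hxI).mul (hdp x)))
      have d := (d0.mul dW).mul ((hw x hxI).div (hp x) (hpn x hxI))
      refine d.congr_deriv ?_
      have h1 := hweq x hx
      have h2 := hode x
      have hx1 : x ^ α = x ^ (α - 1) * x := by
        rw [← Real.rpow_add_one hx.1.ne']; ring_nf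
      have hpx := hpn x hxI
      have e1 : x ^ α * ddp x = - α * x ^ (α - 1) * dp x - M * x ^ α * p x := by
        rw [hx1]; linear_combination (x ^ (α - 1)) * h2
      simp only [Pi.mul_apply, Pi.sub_apply, Pi.div_apply]
      have e2 : α * x ^ (α - 1) * (dw x * p x - w x * dp x) +
          x ^ α * (ddw x * p x + dw x * dp x - (dw x * dp x + w x * ddp x))
          = x ^ α * (M * w x - g x) * p x := by
        linear_combination p x * h1 - w x * e1
      rw [e2]
      field_simp
    apply monotoneOn_of_deriv_nonneg (convex_Icc 0 1) cQ
    · intro x hx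
      rw [interior_Icc] at hx
      exact (hder x hx).differentiableAt.differentiableWithinAt
    · intro x hx
      rw [interior_Icc] at hx
      rw [(hder x hx).deriv]
      have := hg x hx
      have h0 : 0 ≤ x ^ α := Real.rpow_nonneg hx.1.le _
      positivity
  have Q0 : Q 0 = 0 := by simp [hQ, Real.zero_rpow hα.ne']
  have mR : MonotoneOn (fun x => (w x / p x) ^ 2) (Set.Icc 0 1) := by
    have hder : ∀ x ∈ Set.Ioo (0 : ℝ) 1, HasDerivAt (fun x => (w x / p x) ^ 2)
        (2 * (w x / p x) * ((dw x * p x - w x * dp x) / p x ^ 2)) x := by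
      intro x hx
      have hxI := Set.Ioo_subset_Icc_self hx
      have d := ((hw x hxI).div (hp x) (hpn x hxI)).pow 2
      refine d.congr_deriv ?_
      simp
    apply monotoneOn_of_deriv_nonneg (convex_Icc 0 1)
    · exact (cw.div cp.continuousOn hpn).pow 2
    · intro x hx
      rw [interior_Icc] at hx
      exact (hder x hx).differentiableAt.differentiableWithinAt
    · intro x hx
      rw [interior_Icc] at hx
      rw [(hder x hx).deriv]
      have hxI := Set.Ioo_subset_Icc_self hx
      have h1 := mQ (by simp) hxI hx.1.le
      rw [Q0] at h1
      simp only [hQ] at h1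
      have h0 : 0 < x ^ α := Real.rpow_pos_of_pos hx.1 _
      rw [mul_assoc] at h1
      have h2 := nonneg_of_mul_nonneg_right h1 h0
      have h3 := hpos x hxI.1 hxI.2
      have : 2 * (w x / p x) * ((dw x * p x - w x * dp x) / p x ^ 2)
        = 2 * ((dw x * p x - w x * dp x) * (w x / p x)) / p x ^ 2 := by ring
      rw [this]
      positivity
  have hηI : η ∈ Set.Icc (0 : ℝ) 1 := ⟨hη0.le, hη1.le⟩
  have h1I : (1 : ℝ) ∈ Set.Icc (0 : ℝ) 1 := by simp
  have pη := hpos η hη0.le hη1.le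
  have p1 := hpos 1 zero_le_one le_rfl
  have hwη : w η = 0 := by
    by_contra hne
    have h := mR hηI h1I hη1.le
    simp only at h
    rw [hw1, div_pow, div_pow, div_le_div_iff₀ (by positivity) (by positivity)] at h
    have hs : (δ * p η) ^ 2 < p 1 ^ 2 := by
      have : 0 < δ * p η := by positivity
      nlinarith
    have : 0 < w η ^ 2 := by positivity
    nlinarith
  intro x hx
  have h := mR hx h1I hx.2
  simp only [hw1, hwη, mul_zero, zero_div] at h
  have h' : (w x / p x) ^ 2 = 0 := le_antisymm (by simpa using h) (sq_nonneg _)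
  have h'' : w x / p x = 0 := by simpa using h'
  rcases div_eq_zero_iff.1 h'' with h | h
  · exact h
  · exact absurd h (hpn x hx)

/-- **Theorem 5.4 (uniqueness).** For `α ∈ (4n−3, 4n−1)`, `ν = (1−α)/2`,
`0 < η < 1`, `f : [0,1] × ℝ → ℝ` continuous, and `M_λ > 0` such that `(H₀)`
holds with `λ = M_λ` and `f(x,u) − f(x,v) ≤ M_λ·(u − v)` whenever `v ≤ u`:
the BVP `−(x^α y')' = x^α f(x,y)`, `y'(0) = 0`, `y(1) = δ·y(η)` has at most
one solution. -/
theorem uniqueness (n : ℕ) (hn : 1 ≤ n) (α δ η ν : ℝ)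
    (hα1 : 4 * (n : ℝ) - 3 < α) (hα2 : α < 4 * (n : ℝ) - 1)
    (hν : ν = (1 - α) / 2)
    (hη0 : 0 < η) (hη1 : η < 1)
    (f : ℝ → ℝ → ℝ)
    (hfcont : ContinuousOn (fun p : ℝ × ℝ => f p.1 p.2)
      (Set.Icc (0 : ℝ) 1 ×ˢ (Set.univ : Set ℝ)))
    (Mlam : ℝ) (hM : 0 < Mlam)
    (hzero : ∀ t : ℝ, 0 < t → t ≤ Real.sqrt Mlam → besselJ ν t ≠ 0)
    (hδ0 : 0 < δ) (hδ1 : δ < 1)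
    (hH1 : 0 ≤ δ * η ^ ν * besselJ ν (η * Real.sqrt Mlam) - besselJ ν (Real.sqrt Mlam))
    (hH2 : 0 < besselJ (-ν) (Real.sqrt Mlam)
        - δ * η ^ ν * besselJ (-ν) (η * Real.sqrt Mlam))
    (hlip : ∀ x ∈ Set.Icc (0 : ℝ) 1, ∀ u v : ℝ, v ≤ u →
      f x u - f x v ≤ Mlam * (u - v)) :
    ∀ y₁ y₂ : ℝ → ℝ, IsBVPSolution α δ η f y₁ → IsBVPSolution α δ η f y₂ →
      ∀ x ∈ Set.Icc (0 : ℝ) 1, y₁ x = y₂ x := by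
  intro y₁ y₂ ⟨_, d1, c1, dd1, e1, _, b1⟩ ⟨_, d2, c2, dd2, e2, _, b2⟩
  have hn' : (1 : ℝ) ≤ n := by exact_mod_cast hn
  have hνneg : ν < 0 := by rw [hν]; linarith
  have hνint : ∀ k : ℤ, ν ≠ k := by
    intro k hk
    have l1 : 1 - 2 * (n : ℝ) < k := by rw [← hk]; linarith
    have l2 : (k : ℝ) < 2 - 2 * (n : ℝ) := by rw [← hk]; linarith
    have l1' : 1 - 2 * (n : ℤ) < k := by exact_mod_cast l1
    have l2' : k < 2 - 2 * (n : ℤ) := by exact_mod_cast l2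
    omega
  have hnint : ∀ k : ℤ, -ν ≠ k := by
    intro k h
    apply hνint (-k)
    push_cast; linarith
  have hnint1 : ∀ k : ℤ, -ν + 1 ≠ k := by simpa using nonint_shift hnint 1
  have hs : 0 < Real.sqrt Mlam := Real.sqrt_pos.2 hM
  have hsq : Real.sqrt Mlam ^ 2 = Mlam := Real.sq_sqrt hM.le
  have hB : ∀ z, 0 < z → z ≤ Mlam / 4 → bE ν z ≠ 0 := by
    intro z hz hzK h0
    have hz' : 0 < 2 * Real.sqrt z := by have := Real.sqrt_pos.2 hz; positivity
    refine hzero (2 * Real.sqrt z) hz' ?_ ?_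
    · apply Real.le_sqrt_of_sq_le
      rw [mul_pow, Real.sq_sqrt hz.le]
      linarith
    · rw [besselJ_eq ν hz', mul_pow, Real.sq_sqrt hz.le,
        show (2 : ℝ) ^ 2 * z / 4 = z by ring, h0, mul_zero]
  have hA := bE_pos hνint hνneg hB
  have hbd : δ * bE (-ν) (Mlam / 4 * η ^ 2) < bE (-ν) (Mlam / 4 * 1 ^ 2) := by
    rw [besselJ_eq _ hs, besselJ_eq _ (mul_pos hη0 hs), mul_pow, hsq, mul_div_assoc η,
      Real.mul_rpow hη0.le (by positivity)] at hH2
    have h1 : η ^ ν * η ^ (-ν) = 1 := by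
      rw [← Real.rpow_add hη0]; simp
    have h2 : 0 < (Real.sqrt Mlam / 2) ^ (-ν) := Real.rpow_pos_of_pos (by positivity) _
    have h3 : 0 < (Real.sqrt Mlam / 2) ^ (-ν) *
        (bE (-ν) (Mlam / 4) - δ * bE (-ν) (η ^ 2 * Mlam / 4)) := by
      have e : (Real.sqrt Mlam / 2) ^ (-ν) * bE (-ν) (Mlam / 4) -
        δ * η ^ ν * (η ^ (-ν) * (Real.sqrt Mlam / 2) ^ (-ν) * bE (-ν) (η ^ 2 * Mlam / 4))
        = (Real.sqrt Mlam / 2) ^ (-ν) *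
        (bE (-ν) (Mlam / 4) - δ * bE (-ν) (η ^ 2 * Mlam / 4)) := by
        linear_combination (-δ * (Real.sqrt Mlam / 2) ^ (-ν) * bE (-ν) (η ^ 2 * Mlam / 4)) * h1
      rw [← e]; exact hH2
    have h4 := pos_of_mul_pos_right h3 h2.le
    rw [show Mlam / 4 * η ^ 2 = η ^ 2 * Mlam / 4 by ring, show Mlam / 4 * 1 ^ 2 = Mlam / 4 by ring]
    linarith
  have hq : ∀ x : ℝ, HasDerivAt (fun x : ℝ => Mlam / 4 * x ^ 2) (Mlam / 2 * x) x := by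
    intro x
    refine ((hasDerivAt_pow 2 x).const_mul (Mlam / 4)).congr_deriv ?_
    simp; ring
  have hres := comparison (α := α) (M := Mlam) (δ := δ) (η := η)
    (p := fun x => bE (-ν) (Mlam / 4 * x ^ 2))
    (dp := fun x => - bE (-ν + 1) (Mlam / 4 * x ^ 2) * (Mlam / 2 * x))
    (ddp := fun x => bE (-ν + 2) (Mlam / 4 * x ^ 2) * (Mlam / 2 * x) * (Mlam / 2 * x)
      - bE (-ν + 1) (Mlam / 4 * x ^ 2) * (Mlam / 2))
    (w := fun x => y₁ x - y₂ x) (dw := fun x => deriv y₁ x - deriv y₂ x)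
    (ddw := fun x => deriv (deriv y₁) x - deriv (deriv y₂) x)
    (by linarith) hη0 hη1 hδ0 (fun x => f x (y₁ x) - f x (y₂ x))
    (fun x => (bE_hasDerivAt hnint _).comp x (hq x))
    (by
      intro x
      have a := ((bE_hasDerivAt hnint1 (Mlam / 4 * x ^ 2)).comp x (hq x)).neg
      have b := a.mul ((hasDerivAt_id x).const_mul (Mlam / 2))
      refine b.congr_deriv ?_
      rw [show -ν + 1 + 1 = -ν + 2 by ring]
      simp
      ring)
    (by
      intro x
      have r := bE_rec hnint (Mlam / 4 * x ^ 2)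
      have hα : α = 1 - 2 * ν := by rw [hν]; ring
      beta_reduce
      rw [r, hα]
      ring)
    (by
      intro x h0 h1
      apply hA
      · positivity
      · have : x ^ 2 ≤ 1 := by nlinarith
        nlinarith)
    hbd
    (fun x hx => (d1 x hx).hasDerivAt.sub (d2 x hx).hasDerivAt)
    (c1.sub c2)
    (fun x hx => (dd1 x hx).hasDerivAt.sub (dd2 x hx).hasDerivAt)
    (by
      intro x hx
      have h1 := e1 x hx
      have h2 := e2 x hx
      beta_reduce
      linear_combination h2 - h1)
    (by
      intro x hx
      have hxI := Set.Ioo_subset_Icc_self hx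
      beta_reduce
      rcases le_total (y₂ x) (y₁ x) with h | h
      · have := hlip x hxI _ _ h
        exact mul_nonneg (by linarith) (by linarith)
      · have := hlip x hxI _ _ h
        exact mul_nonneg_of_nonpos_of_nonpos (by linarith) (by linarith))
    (by beta_reduce; rw [b1, b2]; ring)
  intro x hx
  have := hres x hx
  beta_reduce at this
  linarith
end
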